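/- arXiv:1201.4075 — 3 statements merged into one kernel-verified Lean document; each statement's English description precedes it below -/
import Mathlib

section
/- Let K ⊆ ℂ be a compact convex set containing two distinct purely imaginary points, and let c > 1. Then there exists a function f ∈ Exp(K) that is frequently hypercyclic for T₁ on Exp(K) and satisfies sup_{x∈ℝ} |f(x)|/(1+|x|^c) < ∞, i.e., |f(x)| = O(1+|x|^c) on the real axis. -/
open Filter Complex

/-- Support function `H_K(z) = sup { Re (z·u) : u ∈ K }` of a set `K ⊆ ℂ`. -/
noncomputable def suppFn (K : Set ℂ) (z : ℂ) : ℝ :=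
  sSup ((fun u => (z * u).re) '' K)

/-- The norm `‖f‖_{K,n} = sup_z |f z| · exp (−H_K z − |z|/n)`. -/
noncomputable def expNorm (K : Set ℂ) (n : ℕ) (f : ℂ → ℂ) : ℝ :=
  sSup (Set.range fun z : ℂ => ‖f z‖ * Real.exp (-(suppFn K z) - ‖z‖ / n))

/-- Membership in `Exp(K)`: `f` is entire and all the norms `‖f‖_{K,n}` are finite. -/
def MemExp (K : Set ℂ) (f : ℂ → ℂ) : Prop :=
  Differentiable ℂ f ∧ ∀ n : ℕ, 0 < n →
    BddAbove (Set.range fun z : ℂ => ‖f z‖ * Real.exp (-(suppFn K z) - ‖z‖ / n))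

open scoped Classical in
/-- Lower density of a set of natural numbers. -/
noncomputable def lowerDensity (A : Set ℕ) : ℝ :=
  liminf (fun N : ℕ =>
    (((Finset.range (N + 1)).filter (fun n => n ∈ A)).card : ℝ) / N) atTop

/-- Lower density of a discrete subset of `ℂ`. -/
noncomputable def ldensC (Λ : Set ℂ) : ℝ :=
  liminf (fun r : ℝ => (Nat.card {z : ℂ // z ∈ Λ ∧ ‖z‖ ≤ r} : ℝ) / r) atTop

/-- `f` is hypercyclic for the translation `T₁` on `Exp(K)`. -/
def HCExp (K : Set ℂ) (f : ℂ → ℂ) : Prop :=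
  MemExp K f ∧ ∀ g : ℂ → ℂ, MemExp K g → ∀ n : ℕ, 0 < n → ∀ ε > (0 : ℝ),
    ∃ k : ℕ, expNorm K n (fun z => f (z + (k : ℂ)) - g z) < ε

/-- `f` is frequently hypercyclic for the translation `T₁` on `Exp(K)`. -/
def FHCExp (K : Set ℂ) (f : ℂ → ℂ) : Prop :=
  MemExp K f ∧ ∀ g : ℂ → ℂ, MemExp K g → ∀ n : ℕ, 0 < n → ∀ ε > (0 : ℝ),
    0 < lowerDensity {k : ℕ | expNorm K n (fun z => f (z + (k : ℂ)) - g z) < ε}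

/-- `f` is hypercyclic (Birkhoff-universal) for `T₁` on `H(ℂ)`. -/
def HCEnt (f : ℂ → ℂ) : Prop :=
  Differentiable ℂ f ∧ ∀ g : ℂ → ℂ, Differentiable ℂ g → ∀ R > (0 : ℝ), ∀ ε > (0 : ℝ),
    ∃ k : ℕ, ∀ z : ℂ, ‖z‖ ≤ R → ‖f (z + (k : ℂ)) - g z‖ < ε

/-- `f` is frequently hypercyclic (frequently Birkhoff-universal) for `T₁` on `H(ℂ)`. -/
def FHCEnt (f : ℂ → ℂ) : Prop :=
  Differentiable ℂ f ∧ ∀ g : ℂ → ℂ, Differentiable ℂ g → ∀ R > (0 : ℝ), ∀ ε > (0 : ℝ),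
    0 < lowerDensity {k : ℕ | ∀ z : ℂ, ‖z‖ ≤ R → ‖f (z + (k : ℂ)) - g z‖ < ε}

/-- `f` is an entire function of (finite) exponential type. -/
def ExpType (f : ℂ → ℂ) : Prop :=
  Differentiable ℂ f ∧ ∃ C τ : ℝ, ∀ z : ℂ, ‖f z‖ ≤ C * Real.exp (τ * ‖z‖)

/-- The indicator function `h_f(θ) = limsup_{r→∞} log |f(r e^{iθ})| / r`. -/
noncomputable def indicatorFn (f : ℂ → ℂ) (θ : ℝ) : ℝ :=
  limsup (fun r : ℝ => Real.log ‖f ((r : ℂ) * Complex.exp (θ * Complex.I))‖ / r) atTop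

section supp
variable {K : Set ℂ}

lemma suppFn_bdd (hK : IsCompact K) (z : ℂ) : BddAbove ((fun u => (z * u).re) '' K) :=
  hK.bddAbove_image (by fun_prop)

lemma le_suppFn (hK : IsCompact K) (z : ℂ) {w : ℂ} (hw : w ∈ K) : (z * w).re ≤ suppFn K z :=
  le_csSup (suppFn_bdd hK z) ⟨w, hw, rfl⟩

lemma exists_suppFn (hK : IsCompact K) (hne : K.Nonempty) (z : ℂ) :
    ∃ k ∈ K, suppFn K z = (z * k).re := by
  obtain ⟨k, hk, h, -⟩ := hK.exists_sSup_image_eq_and_ge hne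
    (f := fun u => (z * u).re) (by fun_prop)
  exact ⟨k, hk, h⟩

lemma suppFn_le (hK : IsCompact K) (hne : K.Nonempty) {M : ℝ} (hM : ∀ k ∈ K, ‖k‖ ≤ M) (z w : ℂ) :
    suppFn K z ≤ suppFn K w + M * ‖z - w‖ := by
  obtain ⟨k, hk, h⟩ := exists_suppFn hK hne z
  have h1 := le_suppFn hK w hk
  have h2 : ((z - w) * k).re ≤ ‖z - w‖ * ‖k‖ := by
    rw [← norm_mul]; exact Complex.re_le_norm _
  have h3 : ‖z - w‖ * ‖k‖ ≤ ‖z - w‖ * M := by gcongr; exact hM k hk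
  rw [sub_mul, Complex.sub_re] at h2
  rw [h]; linarith

lemma suppFn_continuous (hK : IsCompact K) (hne : K.Nonempty) : Continuous (suppFn K) := by
  obtain ⟨M, hM⟩ := hK.isBounded.exists_norm_le
  obtain ⟨k, hk⟩ := hne
  have hM0 : 0 ≤ M := (norm_nonneg k).trans (hM k hk)
  have : LipschitzWith ⟨M, hM0⟩ (suppFn K) := by
    apply LipschitzWith.of_dist_le_mul
    intro z w
    rw [Real.dist_eq, dist_eq_norm, abs_le]
    have h1 := suppFn_le hK ⟨k, hk⟩ hM z w
    have h2 := suppFn_le hK ⟨k, hk⟩ hM w z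
    rw [norm_sub_rev w z] at h2
    change -(M * ‖z - w‖) ≤ _ ∧ _ ≤ M * ‖z - w‖
    constructor <;> linarith
  exact this.continuous

lemma suppFn_smul (hK : IsCompact K) (hne : K.Nonempty) {r : ℝ} (hr : 0 ≤ r) (z : ℂ) :
    suppFn K (r * z) = r * suppFn K z := by
  obtain ⟨k, hk, h⟩ := exists_suppFn hK hne z
  obtain ⟨k', hk', h'⟩ := exists_suppFn hK hne (r * z)
  have h1 := le_suppFn hK z hk'
  have h2 := le_suppFn hK (r * z) hk
  rw [mul_assoc, Complex.re_ofReal_mul] at h' h2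
  apply le_antisymm
  · rw [h']; gcongr
  · rw [h]; exact h2

/-- the support function of the segment -/
noncomputable def segH (u v z : ℂ) : ℝ := max (z * u).re (z * v).re

lemma segH_continuous (u v : ℂ) : Continuous (segH u v) := by
  unfold segH; fun_prop

lemma segH_le (hK : IsCompact K) {u v : ℂ} (hu : u ∈ K) (hv : v ∈ K) (z : ℂ) :
    segH u v z ≤ suppFn K z := max_le (le_suppFn hK z hu) (le_suppFn hK z hv)

lemma segH_per {u v : ℂ} (hu : u.re = 0) (hv : v.re = 0) (z : ℂ) (k : ℝ) :
    segH u v (z + k) = segH u v z := by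
  simp [segH, hu, hv]

end supp

/-- `(e^z - 1)/z` -/
noncomputable def qf : ℂ → ℂ := dslope Complex.exp 0

lemma qf_diff : Differentiable ℂ qf := by
  rw [← differentiableOn_univ]
  exact (Complex.differentiableOn_dslope (by simp)).2 Complex.differentiable_exp.differentiableOn

lemma qf_zero : qf 0 = 1 := by simp [qf]

lemma qf_ne {z : ℂ} (hz : z ≠ 0) : qf z = (Complex.exp z - 1) / z := by
  rw [qf, dslope_of_ne _ hz, slope_def_field]; simp

lemma qf_int (z : ℂ) : qf z = ∫ t in (0:ℝ)..1, Complex.exp (z * t) := by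
  by_cases hz : z = 0
  · simp [hz, qf_zero]
  · rw [integral_exp_mul_complex hz, qf_ne hz]; simp

lemma qf_norm_le (z : ℂ) : ‖qf z‖ ≤ Real.exp (max 0 z.re) := by
  rw [qf_int]
  have := intervalIntegral.norm_integral_le_of_norm_le_const (a := 0) (b := 1)
    (f := fun t : ℝ => Complex.exp (z * t)) (C := Real.exp (max 0 z.re)) ?_
  · simpa using this
  · intro t ht
    rw [Set.uIoc_of_le zero_le_one] at ht
    rw [Complex.norm_exp, Real.exp_le_exp]
    simp only [Complex.re_mul_ofReal]
    rcases le_total z.re 0 with h | h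
    · exact le_max_of_le_left (mul_nonpos_of_nonpos_of_nonneg h ht.1.le)
    · exact le_max_of_le_right (mul_le_of_le_one_right h ht.2)

lemma qf_norm_mul_le (z : ℂ) : ‖qf z‖ * ‖z‖ ≤ 2 * Real.exp (max 0 z.re) := by
  by_cases hz : z = 0
  · simp [hz]
  · rw [qf_ne hz, norm_div, div_mul_cancel₀ _ (by simpa using hz)]
    refine (norm_sub_le _ _).trans ?_
    rw [Complex.norm_exp]
    have h1 : Real.exp z.re ≤ Real.exp (max 0 z.re) := Real.exp_le_exp.2 (le_max_right _ _)
    have h2 : 1 ≤ Real.exp (max 0 z.re) := Real.one_le_exp (le_max_left _ _)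
    simp; linarith

lemma qf_norm_bound (z : ℂ) : ‖qf z‖ * (1 + ‖z‖) ≤ 3 * Real.exp (max 0 z.re) := by
  have := qf_norm_le z
  have := qf_norm_mul_le z
  linarith

/-- the nice functions -/
noncomputable def hf (u v : ℂ) (s δ : ℝ) (z : ℂ) : ℂ :=
  Complex.exp (z * (u + s * (v - u))) * qf (δ * (v - u) * z) ^ 4

lemma hf_diff (u v : ℂ) (s δ : ℝ) : Differentiable ℂ (hf u v s δ) := by
  have := qf_diff
  unfold hf
  fun_prop

lemma seg_re_le (u v z : ℂ) {s : ℝ} (h0 : 0 ≤ s) (h1 : s ≤ 1) :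
    (z * (u + s * (v - u))).re ≤ segH u v z := by
  have e : z * (u + s * (v - u)) = ((1 - s : ℝ) : ℂ) * (z * u) + (s : ℂ) * (z * v) := by
    push_cast; ring
  rw [e, Complex.add_re, Complex.re_ofReal_mul, Complex.re_ofReal_mul]
  have a1 : (z * u).re ≤ segH u v z := le_max_left _ _
  have a2 : (z * v).re ≤ segH u v z := le_max_right _ _
  nlinarith

lemma hf_exp_le (u v z : ℂ) {s δ : ℝ} (hs : 0 ≤ s) (hδ : 0 ≤ δ) (h : s + 4 * δ ≤ 1) :
    ‖Complex.exp (z * (u + s * (v - u)))‖ * Real.exp (max 0 (δ * (v - u) * z).re) ^ 4 ≤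
      Real.exp (segH u v z) := by
  rw [Complex.norm_exp, ← Real.exp_nat_mul, ← Real.exp_add, Real.exp_le_exp]
  have h1 := seg_re_le u v z hs (by linarith)
  have h2 := seg_re_le u v z (s := s + 4 * δ) (by linarith) h
  have e : (z * (u + ((s + 4 * δ : ℝ) : ℂ) * (v - u))).re
      = (z * (u + s * (v - u))).re + 4 * (δ * (v - u) * z).re := by
    have : z * (u + ((s + 4 * δ : ℝ) : ℂ) * (v - u)) =
      z * (u + s * (v - u)) + ((4 : ℝ) : ℂ) * (δ * (v - u) * z) := by push_cast; ring
    rw [this, Complex.add_re, Complex.re_ofReal_mul]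
  rw [e] at h2
  rcases max_cases 0 (δ * (v - u) * z).re with ⟨h3, -⟩ | ⟨h3, -⟩ <;> rw [h3] <;> push_cast <;>
    linarith

lemma hf_norm_le (u v z : ℂ) {s δ : ℝ} (hs : 0 ≤ s) (hδ : 0 ≤ δ) (h : s + 4 * δ ≤ 1) :
    ‖hf u v s δ z‖ ≤ Real.exp (segH u v z) := by
  refine le_trans ?_ (hf_exp_le u v z hs hδ h)
  rw [hf, norm_mul, norm_pow]
  gcongr
  exact qf_norm_le _

lemma hf_bound (u v : ℂ) (huv : u ≠ v) {s δ : ℝ} (hs : 0 ≤ s) (hδ : 0 < δ) (h : s + 4 * δ ≤ 1) :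
    ∃ C : ℝ, 0 ≤ C ∧ ∀ z, ‖hf u v s δ z‖ ≤ C * Real.exp (segH u v z) / (1 + ‖z‖) ^ 4 := by
  set d := δ * ‖v - u‖ with hd
  have hd0 : 0 < d := mul_pos hδ (norm_pos_iff.2 (sub_ne_zero.2 huv.symm))
  refine ⟨(3 * (1 + 1 / d)) ^ 4, by positivity, fun z => ?_⟩
  rw [le_div_iff₀ (by positivity)]
  have h1 := qf_norm_bound (δ * (v - u) * z)
  have e : ‖(δ : ℂ) * (v - u) * z‖ = d * ‖z‖ := by
    rw [norm_mul, norm_mul, hd]; simp [abs_of_pos hδ]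
  rw [e] at h1
  have h2 : 1 + ‖z‖ ≤ (1 + 1 / d) * (1 + d * ‖z‖) := by
    have : (1 + 1 / d) * (1 + d * ‖z‖) = 1 + ‖z‖ + 1 / d + d * ‖z‖ := by field_simp; ring
    rw [this]
    have : 0 < 1 / d := by positivity
    have : 0 ≤ d * ‖z‖ := by positivity
    linarith
  have h3 : ‖qf (δ * (v - u) * z)‖ * (1 + ‖z‖) ≤
      3 * (1 + 1 / d) * Real.exp (max 0 (δ * (v - u) * z).re) := by
    calc _ ≤ ‖qf (δ * (v - u) * z)‖ * ((1 + 1 / d) * (1 + d * ‖z‖)) := by gcongr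
      _ = (1 + 1 / d) * (‖qf (δ * (v - u) * z)‖ * (1 + d * ‖z‖)) := by ring
      _ ≤ (1 + 1 / d) * (3 * Real.exp (max 0 (δ * (v - u) * z).re)) := by gcongr
      _ = _ := by ring
  have h4 := hf_exp_le u v z hs hδ.le h
  rw [hf, norm_mul, norm_pow]
  calc _ = ‖Complex.exp (z * (u + s * (v - u)))‖ *
        (‖qf (δ * (v - u) * z)‖ * (1 + ‖z‖)) ^ 4 := by ring
    _ ≤ ‖Complex.exp (z * (u + s * (v - u)))‖ *
        (3 * (1 + 1 / d) * Real.exp (max 0 (δ * (v - u) * z).re)) ^ 4 := by gcongr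
    _ = (3 * (1 + 1 / d)) ^ 4 * (‖Complex.exp (z * (u + s * (v - u)))‖ *
        Real.exp (max 0 (δ * (v - u) * z).re) ^ 4) := by ring
    _ ≤ _ := by gcongr


/-- the auxiliary entire function -/
noncomputable def phi (g : ℂ → ℂ) (z w : ℂ) : ℂ → ℂ :=
  dslope (fun ζ => g ζ * Complex.exp (-w * (ζ - z))) z

lemma phi_diff {g : ℂ → ℂ} (hg : Differentiable ℂ g) (z w : ℂ) : Differentiable ℂ (phi g z w) := by
  rw [← differentiableOn_univ]
  refine (Complex.differentiableOn_dslope (by simp)).2 ?_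
  fun_prop

lemma phi_ne (g : ℂ → ℂ) {z w ζ : ℂ} (h : ζ ≠ z) :
    phi g z w ζ = g ζ * Complex.exp (-w * (ζ - z)) * (ζ - z)⁻¹ - g z * (ζ - z)⁻¹ := by
  rw [phi, dslope_of_ne _ h, slope_def_field]
  simp [div_eq_mul_inv, sub_mul]

lemma phi_self {g : ℂ → ℂ} (hg : Differentiable ℂ g) (z w : ℂ) :
    phi g z w z = deriv g z - w * g z := by
  rw [phi, dslope_same]
  have h1 : HasDerivAt (fun ζ => Complex.exp (-w * (ζ - z))) (Complex.exp (-w * (z - z)) * (-w * 1)) z :=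
    (((hasDerivAt_id z).sub_const z).const_mul (-w)).cexp
  have h2 := ((hg z).hasDerivAt.mul h1).deriv
  have h3 : (g * fun ζ => Complex.exp (-w * (ζ - z))) = fun ζ => g ζ * Complex.exp (-w * (ζ - z)) := rfl
  rw [h3] at h2
  rw [h2]; simp; ring

/-- the ray integrals -/
noncomputable def rayInt (g : ℂ → ℂ) (z : ℂ) (τ : ℝ) (b : ℕ → ℂ) (j : ℕ) (R : ℝ) : ℂ :=
  ∫ r in (0:ℝ)..R, Complex.exp (((j + 1 : ℕ) * τ : ℝ) * I) *
    (phi g z (b (j + 1)) (circleMap 0 r ((j + 1 : ℕ) * τ)) - phi g z (b j) (circleMap 0 r ((j + 1 : ℕ) * τ)))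

lemma arc_small {C η : ℝ} (hη : 0 < η) (τ : ℝ) (z : ℂ) (F : ℝ → ℝ → ℂ) (a : ℝ)
    (hF : ∀ R, 1 + 2 * ‖z‖ ≤ R → ∀ θ ∈ Set.uIoc a (a + τ), ‖F R θ‖ ≤ C * Real.exp (-η * R)) :
    Tendsto (fun R => ∫ θ in a..(a + τ), F R θ) atTop (nhds 0) := by
  have h1 : Tendsto (fun R => C * Real.exp (-η * R) * |τ|) atTop (nhds (C * 0 * |τ|)) := by
    refine Tendsto.mul_const _ (Tendsto.const_mul _ ?_)
    refine Real.tendsto_exp_atBot.comp ?_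
    exact (tendsto_const_mul_atBot_of_neg (by linarith)).2 tendsto_id
  rw [mul_zero, zero_mul] at h1
  refine squeeze_zero_norm' ?_ h1
  filter_upwards [eventually_ge_atTop (1 + 2 * ‖z‖)] with R hR
  have := intervalIntegral.norm_integral_le_of_norm_le_const (hF R hR)
  simpa using this

theorem repr_tendsto {g : ℂ → ℂ} (hg : Differentiable ℂ g) {N : ℕ} (hN : 0 < N) (b : ℕ → ℂ)
    (hb : b N = b 0) {τ : ℝ} (hτ : N * τ = 2 * Real.pi) {C η : ℝ} (hC : 0 ≤ C) (hη : 0 < η)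
    (hbd : ∀ j : ℕ, ∀ r : ℝ, 0 ≤ r → ∀ θ ∈ Set.Icc (j * τ) (j * τ + τ),
      ‖g (circleMap 0 r θ)‖ * ‖Complex.exp (-b j * circleMap 0 r θ)‖ ≤ C * Real.exp (-η * r))
    (z : ℂ) :
    Tendsto (fun R => ∑ j ∈ Finset.range N, rayInt g z τ b j R) atTop
      (nhds (2 * Real.pi * I * g z)) := by
  have hτ0 : 0 < τ := by
    have : (0:ℝ) < N := by exact_mod_cast hN
    by_contra h
    push Not at h
    nlinarith [Real.pi_pos]
  have hprim : ∀ w, ∃ Φ : ℂ → ℂ, ∀ ζ, HasDerivAt Φ (phi g z w ζ) ζ := by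
    intro w
    obtain ⟨Φ, h⟩ := (phi_diff hg z w).isExactOn_univ
    exact ⟨Φ, fun ζ => h ζ (Set.mem_univ _)⟩
  choose Φ hΦ using hprim
  have hcont : ∀ w, Continuous (phi g z w) := fun w => (phi_diff hg z w).continuous
  have hcm : ∀ θ : ℝ, Continuous (fun r : ℝ => circleMap 0 r θ) := by
    intro θ; simp only [circleMap]; fun_prop
  -- ray integrals
  have hray : ∀ (w : ℂ) (θ R : ℝ), ∫ r in (0:ℝ)..R, Complex.exp (θ * I) * phi g z w (circleMap 0 r θ)
      = Φ w (circleMap 0 R θ) - Φ w 0 := by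
    intro w θ R
    have := intervalIntegral.integral_eq_sub_of_hasDerivAt (a := 0) (b := R)
      (f := fun r : ℝ => Φ w (circleMap 0 r θ))
      (f' := fun r : ℝ => Complex.exp (θ * I) * phi g z w (circleMap 0 r θ)) ?_ ?_
    · simpa using this
    · intro r _
      have h1 : HasDerivAt (fun r : ℝ => circleMap 0 r θ) (Complex.exp (θ * I)) r := by
        simp only [circleMap, zero_add]
        simpa using (Complex.ofRealCLM.hasDerivAt (x := r)).mul_const (Complex.exp (θ * I))
      have := (hΦ w (circleMap 0 r θ)).comp r h1
      rw [mul_comm] at this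
      exact this
    · apply Continuous.intervalIntegrable
      exact continuous_const.mul ((hcont w).comp (hcm θ))
  -- arc integrals
  have hder : ∀ R : ℝ, Continuous (fun θ => deriv (circleMap 0 R) θ) := by
    intro R; simp only [deriv_circleMap]; fun_prop
  have harc : ∀ (w : ℂ) (R a c : ℝ), ∫ θ in a..c, deriv (circleMap 0 R) θ * phi g z w (circleMap 0 R θ)
      = Φ w (circleMap 0 R c) - Φ w (circleMap 0 R a) := by
    intro w R a c
    refine intervalIntegral.integral_eq_sub_of_hasDerivAt
      (f := fun θ : ℝ => Φ w (circleMap 0 R θ)) ?_ ?_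
    · intro θ _
      have h1 : HasDerivAt (circleMap 0 R) (deriv (circleMap 0 R) θ) θ :=
        (differentiable_circleMap 0 R θ).hasDerivAt
      have := (hΦ w (circleMap 0 R θ)).comp θ h1
      rw [mul_comm] at this
      exact this
    · apply Continuous.intervalIntegrable
      exact (hder R).mul ((hcont w).comp (continuous_circleMap 0 R))
  -- small part of arcs
  set A : ℕ → ℝ → ℝ → ℂ := fun j R θ => deriv (circleMap 0 R) θ *
    (g (circleMap 0 R θ) * Complex.exp (-b j * (circleMap 0 R θ - z)) * (circleMap 0 R θ - z)⁻¹) with hA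
  have hRz : ∀ R : ℝ, 1 + 2 * ‖z‖ ≤ R → ∀ θ, R / 2 ≤ ‖circleMap 0 R θ - z‖ := by
    intro R hR θ
    have h1 := norm_sub_norm_le (circleMap 0 R θ) z
    have hz := norm_nonneg z
    have h2 : ‖circleMap 0 R θ‖ = R := by
      rw [norm_circleMap_zero, abs_of_nonneg (by linarith)]
    linarith
  have hne : ∀ R : ℝ, 1 + 2 * ‖z‖ ≤ R → ∀ θ, circleMap 0 R θ - z ≠ 0 := by
    intro R hR θ h
    have := hRz R hR θ
    rw [h, norm_zero] at this
    have hz := norm_nonneg z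
    linarith
  have hAlim : ∀ j, Tendsto (fun R => ∫ θ in (j * τ)..(j * τ + τ), A j R θ) atTop (nhds 0) := by
    intro j
    refine arc_small (C := 2 * C * ‖Complex.exp (b j * z)‖) hη τ z (A j) (j * τ) ?_
    intro R hR θ hθ
    rw [Set.uIoc_of_le (by linarith)] at hθ
    have hz := norm_nonneg z
    have h1 := hbd j R (by linarith) θ ⟨hθ.1.le, hθ.2⟩
    have h2 := hRz R hR θ
    have e : Complex.exp (-b j * (circleMap 0 R θ - z)) =
      Complex.exp (-b j * circleMap 0 R θ) * Complex.exp (b j * z) := by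
      rw [← Complex.exp_add]; ring_nf
    have h3 : ‖deriv (circleMap 0 R) θ‖ = R := by
      rw [deriv_circleMap, norm_mul, norm_circleMap_zero, abs_of_nonneg (by linarith)]; simp
    simp only [hA]
    rw [e, norm_mul, norm_mul, norm_mul, norm_mul, norm_inv, h3]
    have h4 : ‖circleMap 0 R θ - z‖⁻¹ ≤ (R / 2)⁻¹ := inv_anti₀ (by linarith) h2
    calc _ = (‖g (circleMap 0 R θ)‖ * ‖Complex.exp (-b j * circleMap 0 R θ)‖) * ‖Complex.exp (b j * z)‖
          * (R * ‖circleMap 0 R θ - z‖⁻¹) := by ring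
      _ ≤ (C * Real.exp (-η * R)) * ‖Complex.exp (b j * z)‖ * (R * (R / 2)⁻¹) := by
          have hR0 : 0 ≤ R := by linarith
          gcongr
      _ = _ := by
          have : R ≠ 0 := by linarith
          field_simp
  have hsumlim : Tendsto (fun R => 2 * Real.pi * I * g z -
      ∑ j ∈ Finset.range N, ∫ θ in (j * τ)..(j * τ + τ), A j R θ) atTop
      (nhds (2 * Real.pi * I * g z - ∑ j ∈ Finset.range N, 0)) :=
    tendsto_const_nhds.sub (tendsto_finsetSum _ fun j _ => hAlim j)
  rw [Finset.sum_const_zero, sub_zero] at hsumlim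
  refine hsumlim.congr' ?_
  filter_upwards [eventually_ge_atTop (1 + 2 * ‖z‖)] with R hR
  have hz := norm_nonneg z
  have hB : Continuous (fun θ => deriv (circleMap 0 R) θ * (circleMap 0 R θ - z)⁻¹) := by
    refine (hder R).mul (Continuous.inv₀ ?_ (hne R hR))
    exact (continuous_circleMap 0 R).sub continuous_const
  have hAc : ∀ j, Continuous (A j R) := by
    intro j
    have h1 : Continuous (fun θ => (circleMap 0 R θ - z)⁻¹) :=
      Continuous.inv₀ ((continuous_circleMap 0 R).sub continuous_const) (hne R hR)
    have h2 := hg.continuous.comp (continuous_circleMap 0 R)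
    have h3 := continuous_circleMap 0 R
    exact (hder R).mul ((h2.mul (by fun_prop)).mul h1)
  have harc2 : ∀ j : ℕ, Φ (b j) (circleMap 0 R (j * τ + τ)) - Φ (b j) (circleMap 0 R (j * τ)) =
      (∫ θ in (j * τ)..(j * τ + τ), A j R θ) -
      g z * ∫ θ in (j * τ)..(j * τ + τ), deriv (circleMap 0 R) θ * (circleMap 0 R θ - z)⁻¹ := by
    intro j
    rw [← harc, ← intervalIntegral.integral_const_mul, ← intervalIntegral.integral_sub]
    · apply intervalIntegral.integral_congr
      intro θ _
      simp only [hA]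
      rw [phi_ne g (sub_ne_zero.1 (hne R hR θ))]
      ring
    · exact (hAc j).intervalIntegrable _ _
    · exact (continuous_const.mul hB).intervalIntegrable _ _
  have hcirc : ∑ j ∈ Finset.range N, ∫ θ in (j * τ)..(j * τ + τ),
      deriv (circleMap 0 R) θ * (circleMap 0 R θ - z)⁻¹ = 2 * Real.pi * I := by
    have h1 := circleIntegral.integral_sub_inv_of_mem_ball (c := 0) (w := z) (R := R)
      (by rw [Metric.mem_ball, dist_zero_right]; linarith)
    rw [circleIntegral] at h1
    simp only [smul_eq_mul] at h1
    have h2 := intervalIntegral.sum_integral_adjacent_intervals (n := N) (a := fun j : ℕ => j * τ)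
      (f := fun θ => deriv (circleMap 0 R) θ * (circleMap 0 R θ - z)⁻¹) (μ := MeasureTheory.volume)
      (fun k _ => hB.intervalIntegrable _ _)
    simp only [hτ, Nat.cast_zero, zero_mul] at h2
    rw [h1] at h2
    rw [← h2]
    refine Finset.sum_congr rfl fun j _ => ?_
    push_cast
    rw [add_mul, one_mul]
  have hr : ∀ j : ℕ, rayInt g z τ b j R =
      ((Φ (b (j + 1)) (circleMap 0 R ((j + 1 : ℕ) * τ)) - Φ (b (j + 1)) 0) -
       (Φ (b j) (circleMap 0 R (j * τ)) - Φ (b j) 0)) -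
      (Φ (b j) (circleMap 0 R (j * τ + τ)) - Φ (b j) (circleMap 0 R (j * τ))) := by
    intro j
    have e2 : (j * τ + τ) = ((j + 1 : ℕ) * τ) := by push_cast; ring
    rw [e2]
    rw [rayInt]
    simp only [mul_sub]
    rw [intervalIntegral.integral_sub, hray, hray]
    · ring
    · apply Continuous.intervalIntegrable
      exact continuous_const.mul ((hcont _).comp (hcm _))
    · apply Continuous.intervalIntegrable
      exact continuous_const.mul ((hcont _).comp (hcm _))
  simp only [hr, harc2]
  rw [Finset.sum_sub_distrib,
    Finset.sum_range_sub (fun j : ℕ => Φ (b j) (circleMap 0 R (j * τ)) - Φ (b j) 0), hτ, hb,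
    Finset.sum_sub_distrib, ← Finset.mul_sum, hcirc]
  have e3 : circleMap 0 R (2 * Real.pi) = circleMap 0 R (((0:ℕ):ℝ) * τ) := by
    simp [circleMap]
  rw [e3]
  ring


open BoundedContinuousFunction in
/-- `F · ω` is continuous and bounded. -/
def GoodB (ω : ℂ → ℝ) (F : ℂ → ℂ) : Prop :=
  Continuous (fun z => F z * (ω z : ℂ)) ∧ ∃ C : ℝ, ∀ z, ‖F z * (ω z : ℂ)‖ ≤ C

open scoped Classical BoundedContinuousFunction in
/-- `F · ω` as a bounded continuous function. -/
noncomputable def toB (ω : ℂ → ℝ) (F : ℂ → ℂ) : ℂ →ᵇ ℂ :=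
  if h : GoodB ω F then BoundedContinuousFunction.ofNormedAddCommGroup
    (fun z => F z * (ω z : ℂ)) h.1 h.2.choose h.2.choose_spec else 0

lemma toB_apply {ω : ℂ → ℝ} {F : ℂ → ℂ} (h : GoodB ω F) (z : ℂ) : toB ω F z = F z * (ω z : ℂ) := by
  rw [toB, dif_pos h]; rfl

lemma toB_norm_le {ω : ℂ → ℝ} {F : ℂ → ℂ} (h : GoodB ω F) {C : ℝ} (hC : 0 ≤ C)
    (hb : ∀ z, ‖F z * (ω z : ℂ)‖ ≤ C) : ‖toB ω F‖ ≤ C := by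
  rw [BoundedContinuousFunction.norm_le hC]
  intro z; rw [toB_apply h]; exact hb z

lemma le_toB_norm {ω : ℂ → ℝ} {F : ℂ → ℂ} (h : GoodB ω F) (z : ℂ) :
    ‖F z * (ω z : ℂ)‖ ≤ ‖toB ω F‖ := by
  rw [← toB_apply h]; exact BoundedContinuousFunction.norm_coe_le_norm _ z

lemma pow_mul_exp_bdd (k : ℕ) {a : ℝ} (ha : 0 < a) :
    ∃ C : ℝ, 0 ≤ C ∧ ∀ x : ℝ, 0 ≤ x → x ^ k * Real.exp (-a * x) ≤ C := by
  refine ⟨k.factorial / a ^ k, by positivity, fun x hx => ?_⟩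
  have h := Real.pow_div_factorial_le_exp (a * x) (by positivity) k
  rw [mul_pow, div_le_iff₀ (by positivity)] at h
  rw [neg_mul, Real.exp_neg, ← div_eq_mul_inv, div_le_div_iff₀ (Real.exp_pos _) (by positivity)]
  linarith

section weight
variable {K : Set ℂ} {n : ℕ}

/-- the weight -/
noncomputable def wt (K : Set ℂ) (n : ℕ) (z : ℂ) : ℝ := Real.exp (-(suppFn K z) - ‖z‖ / n)

lemma wt_pos (K : Set ℂ) (n : ℕ) (z : ℂ) : 0 < wt K n z := Real.exp_pos _

lemma norm_wt (K : Set ℂ) (n : ℕ) (z x : ℂ) : ‖x * (wt K n z : ℂ)‖ = ‖x‖ * wt K n z := by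
  rw [norm_mul, Complex.norm_real, Real.norm_of_nonneg (wt_pos K n z).le]

lemma wt_continuous (hK : IsCompact K) (hne : K.Nonempty) (n : ℕ) : Continuous (wt K n) := by
  have := suppFn_continuous hK hne
  unfold wt; fun_prop

lemma goodB_of (hK : IsCompact K) (hne : K.Nonempty) {F : ℂ → ℂ} (hF : Continuous F) {C : ℝ}
    (hb : ∀ z, ‖F z‖ * wt K n z ≤ C) : GoodB (wt K n) F := by
  have := wt_continuous hK hne n
  refine ⟨by fun_prop, C, fun z => ?_⟩
  rw [norm_wt]; exact hb z

lemma exp_wt_le (hK : IsCompact K) {k : ℂ} (hk : k ∈ K) (w z : ℂ) :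
    ‖Complex.exp (z * w)‖ * wt K n z ≤ Real.exp (-(1 / n - dist w k) * ‖z‖) := by
  rw [wt, Complex.norm_exp, ← Real.exp_add, Real.exp_le_exp]
  have h1 := le_suppFn hK z hk
  have h2 : (z * (w - k)).re ≤ ‖z‖ * ‖w - k‖ := by rw [← norm_mul]; exact Complex.re_le_norm _
  rw [mul_sub, Complex.sub_re] at h2
  rw [dist_eq_norm]
  have : ‖z‖ / n = 1 / n * ‖z‖ := by ring
  rw [this]
  nlinarith

/-- exponentials in the weighted space -/
noncomputable def Ew (K : Set ℂ) (n : ℕ) (w : ℂ) : BoundedContinuousFunction ℂ ℂ :=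
  toB (wt K n) (fun z => Complex.exp (z * w))

lemma Ew_good (hK : IsCompact K) {w : ℂ} (hw : w ∈ Metric.thickening (1 / (n : ℝ)) K) :
    GoodB (wt K n) (fun z => Complex.exp (z * w)) ∧ ∀ z, ‖Complex.exp (z * w)‖ * wt K n z ≤ 1 := by
  obtain ⟨k, hk, hwk⟩ := Metric.mem_thickening_iff.1 hw
  have h : ∀ z, ‖Complex.exp (z * w)‖ * wt K n z ≤ 1 := by
    intro z
    refine (exp_wt_le hK hk w z).trans ?_
    rw [Real.exp_le_one_iff]
    have := norm_nonneg z
    nlinarith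
  exact ⟨goodB_of hK ⟨k, hk⟩ (by fun_prop) h, h⟩

lemma Ew_norm_le (hK : IsCompact K) {w : ℂ} (hw : w ∈ Metric.thickening (1 / (n : ℝ)) K) :
    ‖Ew K n w‖ ≤ 1 := by
  obtain ⟨h1, h2⟩ := Ew_good hK hw
  refine toB_norm_le h1 zero_le_one fun z => ?_
  rw [norm_wt]; exact h2 z

lemma Ew_hasDerivAt (hK : IsCompact K) {w : ℂ} (hw : w ∈ Metric.thickening (1 / (n : ℝ)) K) :
    HasDerivAt (Ew K n) (toB (wt K n) (fun z => z * Complex.exp (z * w))) w := by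
  obtain ⟨k, hk, hwk⟩ := Metric.mem_thickening_iff.1 hw
  have hne : K.Nonempty := ⟨k, hk⟩
  set ρ := 1 / (n : ℝ) - dist w k with hρ
  have hρ0 : 0 < ρ := by linarith
  obtain ⟨C2, hC2, hb2⟩ := pow_mul_exp_bdd 2 (a := ρ / 2) (by linarith)
  obtain ⟨C1, hC1, hb1⟩ := pow_mul_exp_bdd 1 hρ0
  have hG : GoodB (wt K n) (fun z => z * Complex.exp (z * w)) := by
    refine goodB_of hK hne (by fun_prop) (C := C1) fun z => ?_
    have h1 := exp_wt_le (n := n) hK hk w z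
    have h2 := hb1 ‖z‖ (norm_nonneg z)
    rw [pow_one] at h2
    rw [norm_mul, mul_assoc]
    refine le_trans ?_ h2
    gcongr
  rw [hasDerivAt_iff_isLittleO_nhds_zero]
  have hO : (fun h => Ew K n (w + h) - Ew K n w - h • toB (wt K n) (fun z => z * Complex.exp (z * w)))
      =O[nhds 0] (fun h : ℂ => h ^ 2) := by
    refine Asymptotics.IsBigO.of_bound C2 ?_
    filter_upwards [Metric.ball_mem_nhds (0 : ℂ) (show 0 < ρ / 2 by linarith)] with h hh
    rw [Metric.mem_ball, dist_zero_right] at hh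
    have hwh : w + h ∈ Metric.thickening (1 / (n : ℝ)) K := by
      refine Metric.mem_thickening_iff.2 ⟨k, hk, ?_⟩
      have : dist (w + h) k ≤ dist w k + ‖h‖ := by
        rw [dist_eq_norm, dist_eq_norm, show w + h - k = (w - k) + h by ring]
        exact norm_add_le _ _
      linarith
    rw [BoundedContinuousFunction.norm_le (by positivity)]
    intro z
    simp only [BoundedContinuousFunction.sub_apply, BoundedContinuousFunction.smul_apply, Ew]
    rw [toB_apply (Ew_good hK hwh).1, toB_apply (Ew_good hK hw).1, toB_apply hG]
    have e : Complex.exp (z * (w + h)) * (wt K n z : ℂ) - Complex.exp (z * w) * (wt K n z : ℂ) -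
        h • (z * Complex.exp (z * w) * (wt K n z : ℂ)) =
        ((Complex.exp (z * h) - 1 - z * h) * Complex.exp (z * w)) * (wt K n z : ℂ) := by
      rw [mul_add, Complex.exp_add, smul_eq_mul]; ring
    rw [e, norm_wt, norm_mul, mul_assoc]
    have h1 := exp_wt_le (n := n) hK hk w z
    have h2 := Complex.norm_exp_sub_sum_le_norm_mul_exp (z * h) 2
    simp only [Finset.sum_range_succ, Finset.sum_range_zero, zero_add, pow_zero, pow_one,
      Nat.factorial_zero, Nat.factorial_one, Nat.cast_one, div_one] at h2
    rw [← sub_sub] at h2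
    have h3 := hb2 ‖z‖ (norm_nonneg z)
    have h4 : Real.exp ‖z * h‖ * Real.exp (-ρ * ‖z‖) ≤ Real.exp (-(ρ / 2) * ‖z‖) := by
      rw [← Real.exp_add, Real.exp_le_exp, norm_mul]
      nlinarith [norm_nonneg z]
    calc _ ≤ (‖z * h‖ ^ 2 * Real.exp ‖z * h‖) * Real.exp (-ρ * ‖z‖) :=
          mul_le_mul h2 h1 (mul_nonneg (norm_nonneg _) (wt_pos K n z).le) (by positivity)
      _ = ‖h‖ ^ 2 * (‖z‖ ^ 2 * (Real.exp ‖z * h‖ * Real.exp (-ρ * ‖z‖))) := by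
          rw [norm_mul]; ring
      _ ≤ ‖h‖ ^ 2 * (‖z‖ ^ 2 * Real.exp (-(ρ / 2) * ‖z‖)) := by gcongr
      _ ≤ ‖h‖ ^ 2 * C2 := by gcongr
      _ = C2 * ‖h ^ 2‖ := by rw [norm_pow]; ring
  refine hO.trans_isLittleO ?_
  have := Asymptotics.isLittleO_pow_id (𝕜 := ℂ) (n := 2) (by norm_num)
  simpa using this

end weight


lemma circleMap_scale (r θ : ℝ) : circleMap 0 r θ = r * circleMap 0 1 θ := by
  simp [circleMap]

lemma exists_polygon {K : Set ℂ} (hK : IsCompact K) (hne : K.Nonempty) {n : ℕ} (hn : 0 < n) :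
    ∃ (N : ℕ) (τ : ℝ) (b : ℕ → ℂ), 0 < N ∧ N * τ = 2 * Real.pi ∧ b N = b 0 ∧
      (∀ j, b j ∈ Metric.thickening (1 / (n : ℝ)) K) ∧
      ∀ j : ℕ, ∀ r : ℝ, 0 ≤ r → ∀ θ ∈ Set.Icc (j * τ) (j * τ + τ),
        suppFn K (circleMap 0 r θ) + r / (4 * n) ≤ (b j * circleMap 0 r θ).re := by
  obtain ⟨M, hM⟩ := hK.isBounded.exists_norm_le
  have hM0 : 0 ≤ M := by
    obtain ⟨k, hk⟩ := hne
    exact (norm_nonneg k).trans (hM k hk)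
  have hn' : (0 : ℝ) < n := by exact_mod_cast hn
  set δ : ℝ := 1 / (4 * n) with hδ
  have hδ0 : 0 < δ := by positivity
  obtain ⟨N, hN⟩ := exists_nat_gt ((2 * M + 2 * δ) * (2 * Real.pi) / δ)
  have hN0 : (0 : ℝ) < N := lt_of_le_of_lt (by positivity) hN
  set τ : ℝ := 2 * Real.pi / N with hτ
  have hτ0 : 0 < τ := by positivity
  have hτs : (2 * M + 2 * δ) * τ ≤ δ := by
    rw [hτ, ← mul_div_assoc, div_le_iff₀ hN0]
    rw [div_lt_iff₀ hδ0] at hN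
    linarith
  choose k hk hks using exists_suppFn hK hne
  set β : ℂ → ℂ := fun e => k e + (2 * δ : ℝ) * (starRingEnd ℂ) e with hβ
  refine ⟨N, τ, fun j => β (circleMap 0 1 (j * τ)), by exact_mod_cast hN0, ?_, ?_, ?_, ?_⟩
  · rw [hτ]; field_simp
  · have : (N : ℝ) * τ = 2 * Real.pi := by rw [hτ]; field_simp
    simp only [this]
    congr 1
    simp [circleMap]
  · intro j
    refine Metric.mem_thickening_iff.2 ⟨_, hk (circleMap 0 1 (j * τ)), ?_⟩
    rw [dist_eq_norm]
    simp only [hβ, add_sub_cancel_left]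
    rw [norm_mul, RCLike.norm_conj, norm_circleMap_zero, Complex.norm_real,
      Real.norm_of_nonneg (by positivity)]
    simp only [abs_one, mul_one, hδ]
    rw [← mul_div_assoc, div_lt_div_iff₀ (by positivity) hn']
    linarith
  · intro j r hr θ hθ
    set e := circleMap 0 1 (j * τ) with he
    set e' := circleMap 0 1 θ with he'
    have hee : ‖e' - e‖ ≤ τ := by
      have := (lipschitzWith_circleMap 0 1).dist_le_mul θ (j * τ)
      rw [dist_eq_norm, Real.dist_eq, abs_of_nonneg (by linarith [hθ.1])] at this
      simp at this
      linarith [hθ.2]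
    have hne1 : ‖e‖ = 1 := by rw [he, norm_circleMap_zero]; simp
    have h1 : (β e * e).re = suppFn K e + 2 * δ := by
      have : β e * e = e * k e + ((2 * δ : ℝ) : ℂ) * (((‖e‖ ^ 2 : ℝ)) : ℂ) := by
        simp only [hβ, add_mul, mul_assoc]
        rw [Complex.conj_mul', mul_comm e]; push_cast; ring
      rw [this, hne1, Complex.add_re, ← hks]
      simp
    have h2 : ‖β e‖ ≤ M + 2 * δ := by
      refine (norm_add_le _ _).trans ?_
      rw [norm_mul, RCLike.norm_conj, hne1, Complex.norm_real, Real.norm_of_nonneg (by positivity)]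
      have := hM _ (hk e)
      linarith
    have h3 : (β e * (e - e')).re ≤ (M + 2 * δ) * τ := by
      refine (Complex.re_le_norm _).trans ?_
      rw [norm_mul, norm_sub_rev]
      gcongr
    have h4 := suppFn_le hK hne hM e' e
    have h5 : M * ‖e' - e‖ ≤ M * τ := by gcongr
    rw [mul_sub, Complex.sub_re] at h3
    have h6 : suppFn K e' + δ ≤ (β e * e').re := by linarith
    rw [circleMap_scale r θ, suppFn_smul hK hne hr,
      show β e * (r * circleMap 0 1 θ) = r * (β e * e') by rw [he']; ring, Complex.re_ofReal_mul]
    have : r / (4 * n) = r * δ := by rw [hδ]; ring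
    rw [this, ← mul_add]
    exact mul_le_mul_of_nonneg_left h6 hr

/-- clamp to `[0,1]` -/
noncomputable def clp (t : ℝ) : ℝ := max 0 (min t 1)

lemma clp_mem (t : ℝ) : 0 ≤ clp t ∧ clp t ≤ 1 :=
  ⟨le_max_left _ _, max_le zero_le_one (min_le_right _ _)⟩

lemma clp_of_mem {t : ℝ} (h0 : 0 ≤ t) (h1 : t ≤ 1) : clp t = t := by
  simp [clp, h0, h1]

lemma clp_cont : Continuous clp := by unfold clp; fun_prop

lemma phi_sub {g : ℂ → ℂ} (hg : Differentiable ℂ g) (z b b' ζ : ℂ) :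
    phi g z b' ζ - phi g z b ζ = -(b' - b) * g ζ *
      ∫ t in (0:ℝ)..1, Complex.exp (-(b + t * (b' - b)) * (ζ - z)) := by
  have e : ∫ t in (0:ℝ)..1, Complex.exp (-(b + t * (b' - b)) * (ζ - z)) =
      Complex.exp (-b * (ζ - z)) * qf (-(b' - b) * (ζ - z)) := by
    rw [qf_int, ← intervalIntegral.integral_const_mul]
    congr 1; ext t
    rw [← Complex.exp_add]; ring_nf
  rw [e]
  by_cases hz : ζ = z
  · subst hz
    rw [phi_self hg, phi_self hg]
    simp [qf_zero]; ring
  · have hz' : ζ - z ≠ 0 := sub_ne_zero.2 hz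
    rw [phi_ne g hz, phi_ne g hz]
    by_cases hb : b' = b
    · simp [hb]
    · have hb' : b' - b ≠ 0 := sub_ne_zero.2 hb
      rw [qf_ne (mul_ne_zero (neg_ne_zero.2 hb') hz')]
      have e2 : Complex.exp (-b' * (ζ - z)) =
        Complex.exp (-b * (ζ - z)) * Complex.exp (-(b' - b) * (ζ - z)) := by
        rw [← Complex.exp_add]; ring_nf
      rw [e2]
      field_simp
      ring

open MeasureTheory in
theorem L_zero {K : Set ℂ} (hK : IsCompact K) (hne : K.Nonempty) (hconv : Convex ℝ K)
    {n : ℕ} (hn : 0 < n) (L : BoundedContinuousFunction ℂ ℂ →L[ℂ] ℂ)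
    (hL : ∀ w ∈ Metric.thickening (1 / (n : ℝ)) K, L (Ew K n w) = 0)
    {g : ℂ → ℂ} (hg : MemExp K g) : L (toB (wt K n) g) = 0 := by
  obtain ⟨N, τ, b, hN, hNτ, hb, hbU, hbd⟩ := exists_polygon hK hne hn
  have hn' : (0 : ℝ) < n := by exact_mod_cast hn
  have hτ0 : 0 < τ := by
    have : (0:ℝ) < N := by exact_mod_cast hN
    by_contra h
    push Not at h
    nlinarith [Real.pi_pos]
  obtain ⟨C, hC⟩ := hg.2 (8 * n) (by omega)
  have hgb : ∀ z, ‖g z‖ ≤ C * Real.exp (suppFn K z + ‖z‖ / (8 * n)) := by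
    intro z
    have h1 : ‖g z‖ * Real.exp (-(suppFn K z) - ‖z‖ / ((8 * n : ℕ) : ℝ)) ≤ C := hC ⟨z, rfl⟩
    rw [show -(suppFn K z) - ‖z‖ / ((8 * n : ℕ) : ℝ) = -(suppFn K z + ‖z‖ / (8 * n)) by
      push_cast; ring, Real.exp_neg, ← div_eq_mul_inv, div_le_iff₀ (Real.exp_pos _)] at h1
    exact h1
  have hC0 : 0 ≤ C := by
    have := (norm_nonneg _).trans (hgb 0)
    exact nonneg_of_mul_nonneg_left this (Real.exp_pos _)
  set η : ℝ := 1 / (8 * n) with hη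
  have hη0 : 0 < η := by positivity
  have hdecay : ∀ (w : ℂ) (r θ : ℝ), 0 ≤ r →
      suppFn K (circleMap 0 r θ) + r / (4 * n) ≤ (w * circleMap 0 r θ).re →
      ‖g (circleMap 0 r θ)‖ * ‖Complex.exp (-w * circleMap 0 r θ)‖ ≤ C * Real.exp (-η * r) := by
    intro w r θ hr h
    have h1 := hgb (circleMap 0 r θ)
    rw [norm_circleMap_zero, abs_of_nonneg hr] at h1
    calc _ ≤ C * Real.exp (suppFn K (circleMap 0 r θ) + r / (8 * n)) *
          ‖Complex.exp (-w * circleMap 0 r θ)‖ := by gcongr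
      _ = C * Real.exp (suppFn K (circleMap 0 r θ) + r / (8 * n) - (w * circleMap 0 r θ).re) := by
          rw [Complex.norm_exp, mul_assoc, ← Real.exp_add, neg_mul, Complex.neg_re]; rfl
      _ ≤ _ := by
          gcongr
          have e : r / (4 * n) = r / (8 * n) + η * r := by rw [hη]; field_simp; ring
          rw [e] at h
          linarith
  have hrepr : ∀ z, _ := fun z => repr_tendsto hg.1 hN b hb hNτ hC0 hη0
    (fun j r hr θ hθ => hdecay _ _ _ hr (hbd j r hr θ hθ)) z
  -- the weighted-space valued integrands
  set θ : ℕ → ℝ := fun j => ((j + 1 : ℕ) : ℝ) * τ with hθ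
  set wv : ℕ → ℝ → ℂ := fun j t => b j + (clp t : ℂ) * (b (j + 1) - b j) with hwv
  have hwc : ∀ j, Continuous (wv j) := by
    intro j
    have := clp_cont
    simp only [hwv]; fun_prop
  have hwU : ∀ j t, wv j t ∈ Metric.thickening (1 / (n : ℝ)) K := by
    intro j t
    have h := (hconv.thickening (1 / (n : ℝ))) (hbU j) (hbU (j + 1))
      (show 0 ≤ 1 - clp t by linarith [(clp_mem t).2]) (clp_mem t).1 (by ring)
    convert h using 1
    simp only [hwv, Complex.real_smul]; push_cast; ring
  have hEc : ∀ j, Continuous (fun t => Ew K n (wv j t)) := by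
    intro j
    rw [continuous_iff_continuousAt]
    intro t
    exact ContinuousAt.comp (f := wv j) (Ew_hasDerivAt hK (hwU j t)).continuousAt (hwc j).continuousAt
  have hcm : ∀ θ : ℝ, Continuous (fun r : ℝ => circleMap 0 r θ) := by
    intro θ; simp only [circleMap]; fun_prop
  set I1 : ℕ → ℝ → ℝ → BoundedContinuousFunction ℂ ℂ := fun j r t =>
    Complex.exp (-(wv j t) * circleMap 0 r (θ j)) • Ew K n (wv j t) with hI1
  have hI1c : ∀ j, Continuous (Function.uncurry (I1 j)) := by
    intro j
    have h1 := (hwc j).comp (continuous_snd (X := ℝ) (Y := ℝ))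
    have h2 := (hcm (θ j)).comp (continuous_fst (X := ℝ) (Y := ℝ))
    have h3 := (hEc j).comp (continuous_snd (X := ℝ) (Y := ℝ))
    exact (Complex.continuous_exp.comp (h1.neg.mul h2)).smul h3
  set P : ℕ → ℝ → BoundedContinuousFunction ℂ ℂ := fun j r => ∫ t in (0:ℝ)..1, I1 j r t with hP
  have hPc : ∀ j, Continuous (P j) := fun j =>
    intervalIntegral.continuous_parametric_intervalIntegral_of_continuous' (hI1c j) 0 1
  set Q : ℕ → ℝ → BoundedContinuousFunction ℂ ℂ := fun j r =>
    (Complex.exp (θ j * I) * (-(b (j + 1) - b j) * g (circleMap 0 r (θ j)))) • P j r with hQ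
  have hQc : ∀ j, Continuous (Q j) := by
    intro j
    have h1 := hg.1.continuous.comp (hcm (θ j))
    exact (continuous_const.mul (continuous_const.mul h1)).smul (hPc j)
  have hI1i : ∀ j r, IntervalIntegrable (I1 j r) volume 0 1 := by
    intro j r
    exact ((hI1c j).comp (Continuous.prodMk_right r)).intervalIntegrable _ _
  -- pointwise value
  have hQz : ∀ j r z, Q j r z = (wt K n z : ℂ) * (Complex.exp (θ j * I) *
      (phi g z (b (j + 1)) (circleMap 0 r (θ j)) - phi g z (b j) (circleMap 0 r (θ j)))) := by
    intro j r z
    have h1 : P j r z = (wt K n z : ℂ) *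
        ∫ t in (0:ℝ)..1, Complex.exp (-(b j + t * (b (j + 1) - b j)) * (circleMap 0 r (θ j) - z)) := by
      have h2 := ContinuousLinearMap.intervalIntegral_comp_comm
        (BoundedContinuousFunction.evalCLM ℂ z : BoundedContinuousFunction ℂ ℂ →L[ℂ] ℂ) (hI1i j r)
      simp only [BoundedContinuousFunction.evalCLM_apply] at h2
      rw [hP]
      simp only
      rw [← h2, ← intervalIntegral.integral_const_mul]
      apply intervalIntegral.integral_congr
      intro t ht
      rw [Set.uIcc_of_le zero_le_one] at ht
      simp only [hI1, BoundedContinuousFunction.smul_apply, Ew]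
      rw [toB_apply (Ew_good hK (hwU j t)).1]
      simp only [hwv, clp_of_mem ht.1 ht.2, smul_eq_mul]
      rw [← mul_assoc, ← Complex.exp_add, mul_comm]
      ring_nf
    simp only [hQ, BoundedContinuousFunction.smul_apply, smul_eq_mul]
    rw [h1, phi_sub hg.1]
    ring
  -- integrability
  have hPn : ∀ j r, 0 ≤ r → ‖g (circleMap 0 r (θ j))‖ * ‖P j r‖ ≤ C * Real.exp (-η * r) := by
    intro j r hr
    have h1 : ‖g (circleMap 0 r (θ j)) • P j r‖ ≤ C * Real.exp (-η * r) * |1 - 0| := by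
      simp only [hP]
      rw [← intervalIntegral.integral_smul]
      refine intervalIntegral.norm_integral_le_of_norm_le_const ?_
      intro t _
      simp only [hI1]
      rw [norm_smul, norm_smul]
      have h2 := Ew_norm_le hK (hwU j t)
      have h3 := hdecay (wv j t) r (θ j) hr ?_
      · calc _ = (‖g (circleMap 0 r (θ j))‖ * ‖Complex.exp (-(wv j t) * circleMap 0 r (θ j))‖) *
              ‖Ew K n (wv j t)‖ := by ring
          _ ≤ (C * Real.exp (-η * r)) * 1 := by gcongr
          _ = _ := mul_one _
      · have h4 := hbd j r hr (θ j) ⟨by simp only [hθ]; push_cast; linarith, by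
          simp only [hθ]; push_cast; linarith⟩
        have h5 := hbd (j + 1) r hr (θ j) ⟨by simp only [hθ]; exact le_rfl, by
          simp only [hθ]; linarith⟩
        have e : wv j t * circleMap 0 r (θ j) = ((1 - clp t : ℝ) : ℂ) * (b j * circleMap 0 r (θ j)) +
            (clp t : ℂ) * (b (j + 1) * circleMap 0 r (θ j)) := by
          simp only [hwv]; push_cast; ring
        rw [e, Complex.add_re, Complex.re_ofReal_mul, Complex.re_ofReal_mul]
        have h6 := clp_mem t
        nlinarith
    rw [norm_smul] at h1
    simpa using h1
  have hQi : ∀ j, IntegrableOn (Q j) (Set.Ioi 0) := by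
    intro j
    have h0 : IntegrableOn (fun r => ‖b (j + 1) - b j‖ * (C * Real.exp (-η * r))) (Set.Ioi 0) :=
      ((integrableOn_exp_mul_Ioi (by linarith : -η < 0) 0).const_mul C).const_mul _
    refine Integrable.mono' h0 (hQc j).aestronglyMeasurable ?_
    refine (ae_restrict_iff' measurableSet_Ioi).2 (ae_of_all _ fun r hr => ?_)
    simp only [hQ]
    rw [norm_smul, norm_mul, norm_mul, norm_neg, Complex.norm_exp_ofReal_mul_I, one_mul, mul_assoc]
    exact mul_le_mul_of_nonneg_left (hPn j r (le_of_lt hr)) (norm_nonneg _)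
  -- identify
  have hid : (2 * Real.pi * I : ℂ) • toB (wt K n) g = ∑ j ∈ Finset.range N, ∫ r in Set.Ioi 0, Q j r := by
    ext z
    have hgood : GoodB (wt K n) g := by
      obtain ⟨C', hC'⟩ := hg.2 n hn
      exact goodB_of hK hne hg.1.continuous (C := C') fun z => hC' ⟨z, rfl⟩
    have h1 : Tendsto (fun R => ∑ j ∈ Finset.range N, ∫ r in (0:ℝ)..R, Q j r) atTop
        (nhds (∑ j ∈ Finset.range N, ∫ r in Set.Ioi 0, Q j r)) :=
      tendsto_finsetSum _ fun j _ => intervalIntegral_tendsto_integral_Ioi 0 (hQi j) tendsto_id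
    have h2 := ((BoundedContinuousFunction.evalCLM ℂ z :
      BoundedContinuousFunction ℂ ℂ →L[ℂ] ℂ).continuous.tendsto _).comp h1
    have h3 := (hrepr z).const_mul (wt K n z : ℂ)
    have h4 : (fun R => (wt K n z : ℂ) * ∑ j ∈ Finset.range N, rayInt g z τ b j R) =
        (BoundedContinuousFunction.evalCLM ℂ z : BoundedContinuousFunction ℂ ℂ →L[ℂ] ℂ) ∘
        (fun R => ∑ j ∈ Finset.range N, ∫ r in (0:ℝ)..R, Q j r) := by
      funext R
      simp only [Function.comp, map_sum]
      rw [Finset.mul_sum]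
      refine Finset.sum_congr rfl fun j _ => ?_
      rw [← ContinuousLinearMap.intervalIntegral_comp_comm _ ((hQc j).intervalIntegrable _ _)]
      simp only [BoundedContinuousFunction.evalCLM_apply, hQz]
      rw [intervalIntegral.integral_const_mul, rayInt]
    rw [h4] at h3
    have h5 := tendsto_nhds_unique h3 h2
    rw [BoundedContinuousFunction.evalCLM_apply] at h5
    rw [← h5, BoundedContinuousFunction.smul_apply, toB_apply hgood, smul_eq_mul]
    ring
  have hLP : ∀ j r, L (P j r) = 0 := by
    intro j r
    simp only [hP]
    rw [← ContinuousLinearMap.intervalIntegral_comp_comm _ (hI1i j r)]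
    simp [hI1, hL _ (hwU j _)]
  have hLQ : L ((2 * Real.pi * I : ℂ) • toB (wt K n) g) = 0 := by
    rw [hid, map_sum]
    refine Finset.sum_eq_zero fun j _ => ?_
    rw [← ContinuousLinearMap.integral_comp_comm _ (hQi j)]
    simp [hQ, hLP]
  rw [map_smul, smul_eq_zero] at hLQ
  rcases hLQ with h | h
  · exact absurd h Complex.two_pi_I_ne_zero
  · exact h

section dens
variable {K : Set ℂ}

lemma exists_vanish {E : Type*} [NormedAddCommGroup E] [NormedSpace ℂ E] (S : Submodule ℂ E) (x : E)
    (hx : x ∉ closure (S : Set E)) : ∃ L : E →L[ℂ] ℂ, (∀ a ∈ S, L a = 0) ∧ L x ≠ 0 := by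
  have hconv : Convex ℝ (S.topologicalClosure : Set E) := by
    intro a ha b hb s t _ _ _
    have h1 := S.topologicalClosure.smul_mem (s : ℂ) ha
    have h2 := S.topologicalClosure.smul_mem (t : ℂ) hb
    have := S.topologicalClosure.add_mem h1 h2
    rw [Complex.coe_smul, Complex.coe_smul] at this
    exact this
  obtain ⟨L, r, h1, h2⟩ := RCLike.geometric_hahn_banach_closed_point (𝕜 := ℂ) hconv
    S.isClosed_topologicalClosure (x := x) hx
  have hr : 0 < r := by simpa using h1 0 (S.topologicalClosure.zero_mem)
  refine ⟨L, fun a ha => ?_, fun h => ?_⟩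
  · by_contra hne
    have h3 := h1 (((r : ℂ) / L a) • a) (S.le_topologicalClosure (S.smul_mem _ ha))
    rw [map_smul, smul_eq_mul, div_mul_cancel₀ _ hne] at h3
    simp at h3
  · rw [h] at h2; simp at h2; linarith

noncomputable def sI (i : ℕ) : ℝ := 1 / (2 * ((i : ℝ) + 1))
noncomputable def dJ (j : ℕ) : ℝ := 1 / (8 * ((j : ℝ) + 1))

lemma sI_pos (i : ℕ) : 0 < sI i := by unfold sI; positivity
lemma dJ_pos (i : ℕ) : 0 < dJ i := by unfold dJ; positivity
lemma sd_le (i j : ℕ) : sI i + 4 * dJ j ≤ 1 := by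
  have h1 : sI i ≤ 1 / 2 := by
    unfold sI; gcongr; linarith [(Nat.cast_nonneg i : (0:ℝ) ≤ i)]
  have h2 : dJ j ≤ 1 / 8 := by
    unfold dJ; gcongr; linarith [(Nat.cast_nonneg j : (0:ℝ) ≤ j)]
  linarith

lemma sI_tendsto : Tendsto sI atTop (nhds 0) := by
  have h := (tendsto_one_div_add_atTop_nhds_zero_nat (𝕜 := ℝ)).const_mul (1 / 2)
  rw [mul_zero] at h
  refine h.congr fun i => ?_
  unfold sI; field_simp

lemma dJ_tendsto : Tendsto dJ atTop (nhds 0) := by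
  have h := (tendsto_one_div_add_atTop_nhds_zero_nat (𝕜 := ℝ)).const_mul (1 / 8)
  rw [mul_zero] at h
  refine h.congr fun i => ?_
  unfold dJ; field_simp

lemma segH_wt_le (hK : IsCompact K) {u v : ℂ} (hu : u ∈ K) (hv : v ∈ K) (n : ℕ) (z : ℂ) :
    Real.exp (segH u v z) * wt K n z ≤ Real.exp (-(1 / (n : ℝ)) * ‖z‖) := by
  rw [wt, ← Real.exp_add, Real.exp_le_exp]
  have := segH_le hK hu hv z
  have e : ‖z‖ / n = 1 / (n : ℝ) * ‖z‖ := by ring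
  rw [e]; linarith

lemma hf_wt_le (hK : IsCompact K) {u v : ℂ} (hu : u ∈ K) (hv : v ∈ K) (n : ℕ) (z : ℂ) {s δ : ℝ}
    (hs : 0 ≤ s) (hδ : 0 ≤ δ) (h : s + 4 * δ ≤ 1) :
    ‖hf u v s δ z‖ * wt K n z ≤ Real.exp (-(1 / (n : ℝ)) * ‖z‖) :=
  (mul_le_mul_of_nonneg_right (hf_norm_le u v z hs hδ h) (wt_pos K n z).le).trans
    (segH_wt_le hK hu hv n z)

lemma hf_good (hK : IsCompact K) {u v : ℂ} (hu : u ∈ K) (hv : v ∈ K) (n : ℕ) {s δ : ℝ}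
    (hs : 0 ≤ s) (hδ : 0 ≤ δ) (h : s + 4 * δ ≤ 1) : GoodB (wt K n) (hf u v s δ) := by
  refine goodB_of hK ⟨u, hu⟩ (hf_diff u v s δ).continuous (C := 1) fun z => ?_
  refine (hf_wt_le hK hu hv n z hs hδ h).trans ?_
  rw [Real.exp_le_one_iff, neg_mul]
  have : 0 ≤ 1 / (n : ℝ) * ‖z‖ := by positivity
  linarith

lemma hf_zero_d (u v : ℂ) (s : ℝ) (z : ℂ) : hf u v s 0 z = Complex.exp (z * (u + s * (v - u))) := by
  simp [hf, qf_zero]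

lemma hf_tendsto (hK : IsCompact K) {u v : ℂ} (hu : u ∈ K) (hv : v ∈ K) {n : ℕ} (hn : 0 < n) {s : ℝ}
    (hs : 0 < s) (hs' : s ≤ 1) {d : ℕ → ℝ} (hd : ∀ j, 0 < d j) (hsd : ∀ j, s + 4 * d j ≤ 1)
    (hd0 : Tendsto d atTop (nhds 0)) :
    Tendsto (fun j => toB (wt K n) (hf u v s (d j))) atTop (nhds (Ew K n (u + s * (v - u)))) := by
  have e0 : Ew K n (u + s * (v - u)) = toB (wt K n) (hf u v s 0) := by
    unfold Ew; congr 1; ext z; rw [hf_zero_d]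
  have hg0 : GoodB (wt K n) (hf u v s 0) := hf_good hK hu hv n hs.le le_rfl (by linarith)
  have hgj : ∀ j, GoodB (wt K n) (hf u v s (d j)) := fun j =>
    hf_good hK hu hv n hs.le (hd j).le (hsd j)
  rw [e0, Metric.tendsto_atTop]
  intro ε hε
  have hn' : 0 < 1 / (n : ℝ) := by positivity
  -- radius
  obtain ⟨R, hR⟩ : ∃ R : ℝ, ∀ x, R ≤ x → Real.exp (-(1 / (n : ℝ)) * x) ≤ ε / 4 := by
    have h1 : Tendsto (fun x : ℝ => Real.exp (-(1 / (n : ℝ)) * x)) atTop (nhds 0) := by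
      refine Real.tendsto_exp_atBot.comp ?_
      exact tendsto_id.const_mul_atTop_of_neg (by linarith)
    obtain ⟨R, hR⟩ := (h1.eventually (ge_mem_nhds (by positivity : (0:ℝ) < ε / 4))).exists_forall_of_atTop
    exact ⟨R, hR⟩
  -- uniform continuity on the compact set
  have hcont : Continuous (fun p : ℝ × ℂ => (qf (p.1 * (v - u) * p.2) ^ 4 - 1 : ℂ)) := by
    have := qf_diff.continuous
    fun_prop
  have hunif : ∀ᶠ t : ℝ in nhds (0:ℝ), ∀ z ∈ Metric.closedBall (0:ℂ) R,
      ‖(qf ((t : ℂ) * (v - u) * z) ^ 4 - 1 : ℂ)‖ < ε / 2 := by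
    refine (isCompact_closedBall (0:ℂ) R).eventually_forall_of_forall_eventually fun z _ => ?_
    have : ContinuousAt (fun p : ℝ × ℂ => ‖(qf (p.1 * (v - u) * p.2) ^ 4 - 1 : ℂ)‖) (0, z) :=
      hcont.norm.continuousAt
    refine this.eventually_lt_const ?_
    simp [qf_zero, hε]
  obtain ⟨J, hJ⟩ := (hd0.eventually hunif).exists_forall_of_atTop
  refine ⟨J, fun j hj => ?_⟩
  refine lt_of_le_of_lt ?_ (half_lt_self hε)
  rw [dist_eq_norm, BoundedContinuousFunction.norm_le (by positivity)]
  intro z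
  rw [BoundedContinuousFunction.sub_apply, toB_apply (hgj j), toB_apply hg0, ← sub_mul, norm_wt]
  rcases le_or_gt ‖z‖ R with hz | hz
  · have h1 := hJ j hj z (by simpa using hz)
    have h2 : hf u v s (d j) z - hf u v s 0 z =
        hf u v s 0 z * (qf (d j * (v - u) * z) ^ 4 - 1) := by
      rw [hf_zero_d]; unfold hf; ring
    rw [h2, norm_mul]
    have h3 := hf_wt_le hK hu hv n z hs.le le_rfl (by linarith : s + 4 * 0 ≤ 1)
    have h4 : Real.exp (-(1 / (n : ℝ)) * ‖z‖) ≤ 1 := by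
      rw [Real.exp_le_one_iff, neg_mul]
      have : 0 ≤ 1 / (n : ℝ) * ‖z‖ := by positivity
      linarith
    calc _ = (‖hf u v s 0 z‖ * wt K n z) * ‖(qf (d j * (v - u) * z) ^ 4 - 1 : ℂ)‖ := by ring
      _ ≤ 1 * (ε / 2) := by
        gcongr
        exact h3.trans h4
      _ = ε / 2 := one_mul _
  · have h3 := hf_wt_le hK hu hv n z hs.le le_rfl (by linarith : s + 4 * 0 ≤ 1)
    have h4 := hf_wt_le hK hu hv n z hs.le (hd j).le (hsd j)
    have h5 := hR ‖z‖ hz.le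
    have h6 := norm_sub_le (hf u v s (d j) z) (hf u v s 0 z)
    calc _ ≤ (‖hf u v s (d j) z‖ + ‖hf u v s 0 z‖) * wt K n z :=
          mul_le_mul_of_nonneg_right h6 (wt_pos K n z).le
      _ ≤ ε / 2 := by rw [add_mul]; linarith

/-- Enumerated family. -/
noncomputable def eF (u v : ℂ) (k : ℕ) : ℂ → ℂ := hf u v (sI k.unpair.1) (dJ k.unpair.2)

lemma eF_good (hK : IsCompact K) {u v : ℂ} (hu : u ∈ K) (hv : v ∈ K) (n k : ℕ) :
    GoodB (wt K n) (eF u v k) :=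
  hf_good hK hu hv n (sI_pos _).le (dJ_pos _).le (sd_le _ _)

lemma dense_span (hK : IsCompact K) (hconv : Convex ℝ K) {u v : ℂ} (hu : u ∈ K) (hv : v ∈ K)
    (huv : u ≠ v) {n : ℕ} (hn : 0 < n) {g : ℂ → ℂ} (hg : MemExp K g) :
    toB (wt K n) g ∈
      closure (Submodule.span ℂ (Set.range fun k => toB (wt K n) (eF u v k)) : Set _) := by
  by_contra hx
  obtain ⟨L, hL, hLg⟩ := exists_vanish _ _ hx
  apply hLg
  have hn' : 0 < 1 / (n : ℝ) := by positivity
  have hopen : IsOpen (Metric.thickening (1 / (n : ℝ)) K) := Metric.isOpen_thickening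
  have hsub : K ⊆ Metric.thickening (1 / (n : ℝ)) K := Metric.self_subset_thickening hn' K
  have hlam : ∀ i, L (Ew K n (u + sI i * (v - u))) = 0 := by
    intro i
    have h1 := hf_tendsto hK hu hv hn (sI_pos i) (by linarith [sd_le i 0, dJ_pos 0]) dJ_pos
      (sd_le i) dJ_tendsto
    have h2 := (L.continuous.tendsto _).comp h1
    refine tendsto_nhds_unique h2 (tendsto_const_nhds.congr fun j => ?_)
    symm
    apply hL
    apply Submodule.subset_span
    refine ⟨Nat.pair i j, ?_⟩
    simp [eF]
  have hdiff : DifferentiableOn ℂ (fun w => L (Ew K n w)) (Metric.thickening (1 / (n : ℝ)) K) := by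
    intro w hw
    have := Ew_hasDerivAt hK hw
    exact (L.hasFDerivAt.comp_hasDerivAt w this).differentiableAt.differentiableWithinAt
  have hzero : Set.EqOn (fun w => L (Ew K n w)) 0 (Metric.thickening (1 / (n : ℝ)) K) := by
    refine (hdiff.analyticOnNhd hopen).eqOn_zero_of_preconnected_of_frequently_eq_zero
      (hconv.thickening _).isPreconnected (hsub hu) ?_
    have ht : Tendsto (fun i => u + sI i * (v - u)) atTop (nhdsWithin u {u}ᶜ) := by
      rw [tendsto_nhdsWithin_iff]
      constructor
      · have : Tendsto (fun i => u + ((sI i : ℝ) : ℂ) * (v - u)) atTop (nhds (u + ((0:ℝ):ℂ) * (v - u))) :=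
          (((Complex.continuous_ofReal.tendsto 0).comp sI_tendsto).mul_const _).const_add _
        simpa using this
      · refine Eventually.of_forall fun i => ?_
        simp [(sI_pos i).ne', sub_eq_zero, huv.symm]
    exact ht.frequently (Frequently.of_forall hlam)
  exact L_zero hK ⟨u, hu⟩ hconv hn L (fun w hw => hzero hw) hg

/-- Countable family. -/
noncomputable def dF (u v : ℂ) (i : ℕ) (z : ℂ) : ℂ :=
  ∑ k ∈ Finset.range i.unpair.1, TopologicalSpace.denseSeq (ℕ → ℂ) i.unpair.2 k * eF u v k z

lemma dF_diff (u v : ℂ) (i : ℕ) : Differentiable ℂ (dF u v i) := by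
  have : ∀ k, Differentiable ℂ (eF u v k) := fun k => hf_diff _ _ _ _
  unfold dF
  fun_prop

lemma dF_bound (u v : ℂ) (huv : u ≠ v) (i : ℕ) :
    ∃ C : ℝ, 0 ≤ C ∧ ∀ z, ‖dF u v i z‖ ≤ C * Real.exp (segH u v z) / (1 + ‖z‖) ^ 4 := by
  have h : ∀ k, ∃ C : ℝ, 0 ≤ C ∧ ∀ z, ‖eF u v k z‖ ≤ C * Real.exp (segH u v z) / (1 + ‖z‖) ^ 4 :=
    fun k => hf_bound u v huv (sI_pos _).le (dJ_pos _) (sd_le _ _)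
  choose C hC0 hC using h
  refine ⟨∑ k ∈ Finset.range i.unpair.1,
    ‖TopologicalSpace.denseSeq (ℕ → ℂ) i.unpair.2 k‖ * C k,
    Finset.sum_nonneg fun k _ => mul_nonneg (norm_nonneg _) (hC0 k), fun z => ?_⟩
  rw [Finset.sum_mul, Finset.sum_div]
  refine (norm_sum_le _ _).trans (Finset.sum_le_sum fun k _ => ?_)
  rw [norm_mul]
  calc _ ≤ _ := mul_le_mul_of_nonneg_left (hC k z) (norm_nonneg _)
    _ = _ := by ring

lemma dF_dense (hK : IsCompact K) (hconv : Convex ℝ K) {u v : ℂ} (hu : u ∈ K) (hv : v ∈ K)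
    (huv : u ≠ v) {n : ℕ} (hn : 0 < n) {g : ℂ → ℂ} (hg : MemExp K g) {ε : ℝ} (hε : 0 < ε) :
    ∃ i, ∀ z, ‖dF u v i z - g z‖ * wt K n z ≤ ε := by
  have hgood : GoodB (wt K n) g := by
    obtain ⟨C', hC'⟩ := hg.2 n hn
    exact goodB_of hK ⟨u, hu⟩ hg.1.continuous (C := C') fun z => hC' ⟨z, rfl⟩
  obtain ⟨b, hb, hbd⟩ := Metric.mem_closure_iff.1 (dense_span hK hconv hu hv huv hn hg) ε hε
  set B := fun k => toB (wt K n) (eF u v k) with hB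
  obtain ⟨c, rfl⟩ := (Finsupp.mem_span_range_iff_exists_finsupp).1 hb
  obtain ⟨N, hN⟩ : ∃ N, c.support ⊆ Finset.range N := c.support.exists_nat_subset_range
  have e1 : (c.sum fun i a => a • B i) = ∑ k ∈ Finset.range N, c k • B k :=
    Finsupp.sum_of_support_subset _ hN _ (by simp)
  rw [e1] at hbd
  have hcont : Continuous fun a : ℕ → ℂ => dist (toB (wt K n) g) (∑ k ∈ Finset.range N, a k • B k) := by
    fun_prop
  obtain ⟨j, hj⟩ := (TopologicalSpace.denseRange_denseSeq (ℕ → ℂ)).exists_mem_open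
      (isOpen_Iio.preimage hcont (t := Set.Iio ε)) ⟨fun k => c k, hbd⟩
  refine ⟨Nat.pair N j, fun z => ?_⟩
  have hj' : dist (toB (wt K n) g)
      (∑ k ∈ Finset.range N, TopologicalSpace.denseSeq (ℕ → ℂ) j k • B k) < ε := hj
  rw [dist_comm, dist_eq_norm] at hj'
  refine le_trans ?_ hj'.le
  have h1 := BoundedContinuousFunction.norm_coe_le_norm
    ((∑ k ∈ Finset.range N, TopologicalSpace.denseSeq (ℕ → ℂ) j k • B k) - toB (wt K n) g) z
  refine le_trans (le_of_eq ?_) h1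
  rw [BoundedContinuousFunction.sub_apply, BoundedContinuousFunction.sum_apply, toB_apply hgood,
    ← norm_wt, sub_mul]
  congr 2
  unfold dF
  rw [Nat.unpair_pair, Finset.sum_mul]
  refine Finset.sum_congr rfl fun k _ => ?_
  rw [BoundedContinuousFunction.smul_apply, hB]
  simp only [smul_eq_mul]
  rw [toB_apply (eF_good hK hu hv n k), mul_assoc]

end dens


noncomputable def labN (m : ℕ) : ℕ := padicValNat 2 (m + 1)
noncomputable def posN (m : ℕ) : ℕ :=
  padicValNat 2 (m.factorial) + padicValNat 2 ((m + 1).factorial) + 2 * m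

lemma padic_fact_succ (m : ℕ) :
    padicValNat 2 ((m + 1).factorial) = padicValNat 2 (m.factorial) + labN m := by
  rw [Nat.factorial_succ, padicValNat.mul (by omega) (Nat.factorial_ne_zero m), labN, add_comm]

lemma padic_fact_le (m : ℕ) : padicValNat 2 (m.factorial) ≤ m := by
  have h := sub_one_mul_padicValNat_factorial (p := 2) m
  simp at h
  omega

lemma posN_le (m : ℕ) : posN m ≤ 4 * m + 1 := by
  have h1 := padic_fact_le m
  have h2 := padic_fact_le (m + 1)
  unfold posN; omega

lemma padic_fact_mono {m m' : ℕ} (h : m ≤ m') :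
    padicValNat 2 (m.factorial) ≤ padicValNat 2 (m'.factorial) := by
  induction m', h using Nat.le_induction with
  | base => exact le_rfl
  | succ k hk ih => rw [padic_fact_succ]; omega

lemma posN_sep_lt {m m' : ℕ} (h : m < m') :
    posN m + labN m + labN m' + 2 * (m' - m) ≤ posN m' := by
  have h1 := padic_fact_mono (show m + 1 ≤ m' by omega)
  have h2 := padic_fact_mono (show m + 1 ≤ m' by omega)
  have h3 := padic_fact_succ m
  have h4 := padic_fact_succ m'
  unfold posN; omega

lemma labN_le_posN (m : ℕ) : labN m ≤ posN m := by
  have h3 := padic_fact_succ m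
  unfold posN; omega

lemma le_posN (m : ℕ) : m ≤ posN m := by unfold posN; omega

lemma posN_strictMono : StrictMono posN := by
  intro m m' h
  have := posN_sep_lt h
  omega

lemma posN_sep {m m' : ℕ} (h : m' ≠ m) :
    (labN m : ℝ) + labN m' + 2 * |((m' : ℤ) - (m : ℤ) : ℤ)| ≤ |(posN m : ℝ) - posN m'| := by
  rcases lt_or_gt_of_ne h with h | h
  · have := posN_sep_lt h
    have h2 : (posN m' : ℝ) + labN m' + labN m + 2 * ((m : ℝ) - m') ≤ posN m := by
      have : ((posN m' + labN m' + labN m + 2 * (m - m') : ℕ) : ℝ) ≤ posN m := by exact_mod_cast this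
      push_cast [Nat.cast_sub h.le] at this
      exact this
    have h3 : ((|((m' : ℤ) - (m : ℤ) : ℤ)| : ℤ) : ℝ) = m - m' := by
      rw [abs_of_nonpos (by omega)]; push_cast; ring
    rw [h3]
    exact le_trans (by linarith) (le_abs_self _)
  · have := posN_sep_lt h
    have h2 : (posN m : ℝ) + labN m + labN m' + 2 * ((m' : ℝ) - m) ≤ posN m' := by
      have : ((posN m + labN m + labN m' + 2 * (m' - m) : ℕ) : ℝ) ≤ posN m' := by exact_mod_cast this
      push_cast [Nat.cast_sub h.le] at this
      exact this
    have h3 : ((|((m' : ℤ) - (m : ℤ) : ℤ)| : ℤ) : ℝ) = m' - m := by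
      rw [abs_of_nonneg (by omega)]; push_cast; ring
    rw [h3]
    exact le_trans (by linarith) (neg_le_abs _)

noncomputable def sq1 (j : ℤ) : ℝ := 1 / (1 + |(j : ℝ)|) ^ 2

lemma sq1_nonneg (j : ℤ) : 0 ≤ sq1 j := by unfold sq1; positivity

lemma sq1_summable : Summable sq1 := by
  have h0 : Summable (fun n : ℕ => 1 / (1 + (n : ℝ)) ^ 2) := by
    have := (summable_nat_add_iff 1).2 (Real.summable_one_div_nat_pow.2 (show 1 < 2 by norm_num))
    refine this.congr ?_
    intro n; push_cast; rw [add_comm]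
  apply Summable.of_nat_of_neg
  · refine h0.congr ?_
    intro n; simp [sq1]
  · refine h0.congr ?_
    intro n; simp [sq1]

lemma sum_inv_le (x : ℝ) :
    Summable (fun m => 1 / (1 + |x - posN m|) ^ 2) ∧
    ∑' m, 1 / (1 + |x - posN m|) ^ 2 ≤ 4 * ∑' j, sq1 j := by
  have hinj : Function.Injective (fun m : ℕ => (posN m : ℤ) - ⌊x⌋) := by
    intro a b h
    simp at h
    exact posN_strictMono.injective h
  have hs : Summable (fun m : ℕ => 4 * sq1 ((posN m : ℤ) - ⌊x⌋)) :=
    (sq1_summable.comp_injective hinj).mul_left 4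
  have hle : ∀ m, 1 / (1 + |x - posN m|) ^ 2 ≤ 4 * sq1 ((posN m : ℤ) - ⌊x⌋) := by
    intro m
    unfold sq1
    have h1 : |((((posN m : ℤ) - ⌊x⌋ : ℤ)) : ℝ)| ≤ |x - posN m| + 1 := by
      push_cast
      have hf := Int.floor_le x
      have hf2 := Int.lt_floor_add_one x
      rw [abs_le]
      constructor
      · have := le_abs_self (x - posN m); linarith
      · have := neg_abs_le (x - posN m); linarith
    have h2 : 0 ≤ |((((posN m : ℤ) - ⌊x⌋ : ℤ)) : ℝ)| := abs_nonneg _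
    have h3 : 0 ≤ |x - posN m| := abs_nonneg _
    rw [mul_one_div, div_le_div_iff₀ (by positivity) (by positivity)]
    nlinarith
  have hs1 : Summable (fun m => 1 / (1 + |x - posN m|) ^ 2) :=
    Summable.of_nonneg_of_le (fun m => by positivity) hle hs
  refine ⟨hs1, (hs1.tsum_le_tsum hle hs).trans ?_⟩
  rw [tsum_mul_left]
  have := tsum_comp_le_tsum_of_inj sq1_summable sq1_nonneg hinj
  have h5 : ∑' m : ℕ, sq1 ((posN m : ℤ) - ⌊x⌋) ≤ ∑' j, sq1 j := this
  linarith

lemma one_add_mul_le (z w : ℂ) : 1 + ‖w‖ ≤ (1 + ‖z‖) * (1 + ‖z + w‖) := by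
  have : ‖w‖ ≤ ‖z + w‖ + ‖z‖ := by
    have := norm_sub_le (z + w) z
    simpa using this
  nlinarith [norm_nonneg z, norm_nonneg (z + w)]

theorem construct (φ : ℕ → ℂ → ℂ) (hd : ∀ s, Differentiable ℂ (φ s)) (H : ℂ → ℝ)
    (hH : Continuous H) (hper : ∀ z (k : ℝ), H (z + k) = H z)
    (hφ : ∀ s z, ‖φ s z‖ ≤ (s + 1) * Real.exp (H z) / (1 + ‖z‖) ^ 4) :
    ∃ f : ℂ → ℂ, Differentiable ℂ f ∧
      (∃ C : ℝ, ∀ z, ‖f z‖ ≤ C * (1 + ‖z‖) * Real.exp (H z)) ∧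
      (∃ C : ℝ, ∀ m z, ‖f (z + (posN m : ℂ)) - φ (labN m) z‖ ≤
        C * (1 + ‖z‖) ^ 4 * Real.exp (H z) / (labN m + 1)) := by
  set T : ℕ → ℂ → ℂ := fun m z => φ (labN m) (z - posN m) with hT
  have hHs : ∀ z (m : ℕ), H (z - m) = H z := by
    intro z m
    have := hper (z - m) m
    simpa using this.symm
  have hT1 : ∀ m z, ‖T m z‖ ≤ (posN m + 1) * Real.exp (H z) / (1 + ‖z - posN m‖) ^ 4 := by
    intro m z
    refine (hφ _ _).trans ?_
    rw [hHs]
    gcongr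
    exact labN_le_posN m
  have hn : ∀ (m : ℕ) , ‖(m : ℂ)‖ = m := fun m => by simp
  -- first bound
  have hTa : ∀ m z, ‖T m z‖ ≤ (1 + ‖z‖) * Real.exp (H z) * (1 / (1 + |z.re - posN m|) ^ 2) := by
    intro m z
    refine (hT1 m z).trans ?_
    have h1 := one_add_mul_le z (-(posN m : ℂ))
    rw [norm_neg, hn, ← sub_eq_add_neg] at h1
    have h2 : |z.re - posN m| ≤ ‖z - posN m‖ := by
      have := Complex.abs_re_le_norm (z - posN m)
      simpa using this
    have h3 : 0 ≤ |z.re - posN m| := abs_nonneg _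
    rw [mul_one_div, div_le_div_iff₀ (by positivity) (by positivity)]
    set A := ‖z - posN m‖
    set B := |z.re - posN m|
    set e := Real.exp (H z)
    have he : 0 ≤ e := (Real.exp_pos _).le
    have hz := norm_nonneg z
    have h4 : (1 + B) ^ 2 ≤ (1 + A) ^ 2 := by gcongr
    have h5 : (1 + A) ^ 2 ≤ (1 + A) ^ 3 := pow_le_pow_right₀ (by linarith) (by norm_num)
    calc (posN m + 1) * e * (1 + B) ^ 2 ≤ ((1 + ‖z‖) * (1 + A)) * e * (1 + A) ^ 3 := by
          gcongr
          · linarith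
          · linarith
      _ = _ := by ring
  -- second bound
  have hTb : ∀ m z, ‖T m z‖ ≤ (1 + ‖z‖) ^ 4 * Real.exp (H z) * sq1 m := by
    intro m z
    refine (hT1 m z).trans ?_
    have h1 := one_add_mul_le z (-(posN m : ℂ))
    rw [norm_neg, hn, ← sub_eq_add_neg] at h1
    unfold sq1
    have hm : ((m : ℕ) : ℝ) ≤ posN m := by exact_mod_cast le_posN m
    have hm0 : (0 : ℝ) ≤ m := Nat.cast_nonneg m
    simp only [Int.cast_natCast, Nat.abs_cast]
    rw [mul_one_div, div_le_div_iff₀ (by positivity) (by positivity)]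
    set A := ‖z - posN m‖
    set e := Real.exp (H z)
    have he : 0 ≤ e := (Real.exp_pos _).le
    have hz := norm_nonneg z
    have hA : 0 ≤ A := norm_nonneg _
    generalize (posN m : ℝ) = p at *
    have hp : 0 ≤ p := hm0.trans hm
    rw [add_comm p 1]
    calc (1 + p) * e * (1 + m) ^ 2 ≤ (1 + p) * e * (1 + p) ^ 2 := by
          gcongr
      _ = e * (1 + p) ^ 3 := by ring
      _ ≤ e * (1 + p) ^ 4 := by
          gcongr
          · linarith
          · norm_num
      _ ≤ e * ((1 + ‖z‖) * (1 + A)) ^ 4 := by gcongr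
      _ = _ := by ring
  have hsqN : Summable (fun m : ℕ => sq1 m) := sq1_summable.comp_injective Nat.cast_injective
  have hsum : ∀ z, Summable (fun m => T m z) := by
    intro z
    exact Summable.of_norm_bounded (hsqN.mul_left _) (fun m => hTb m z)
  refine ⟨fun z => ∑' m, T m z, ?_, ⟨4 * ∑' j, sq1 j, ?_⟩, ⟨∑' j, sq1 j, ?_⟩⟩
  · intro z
    obtain ⟨M, hM⟩ := (isCompact_closedBall (0 : ℂ) (‖z‖ + 1)).bddAbove_image
      (f := fun z => (1 + ‖z‖) ^ 4 * Real.exp (H z)) (by fun_prop)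
    have : DifferentiableOn ℂ (fun z => ∑' m, T m z) (Metric.ball 0 (‖z‖ + 1)) := by
      refine differentiableOn_tsum_of_summable_norm (u := fun m => M * sq1 m)
        (hsqN.mul_left _) ?_ Metric.isOpen_ball ?_
      · intro m
        apply Differentiable.differentiableOn
        have := hd (labN m)
        simp only [hT]
        fun_prop
      · intro m w hw
        refine (hTb m w).trans ?_
        apply mul_le_mul_of_nonneg_right _ (sq1_nonneg _)
        exact hM ⟨w, Metric.ball_subset_closedBall hw, rfl⟩
    exact this.differentiableAt (Metric.isOpen_ball.mem_nhds (by simp))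
  · intro z
    obtain ⟨hs, hle⟩ := sum_inv_le z.re
    have h1 := tsum_of_norm_bounded (hs.mul_left ((1 + ‖z‖) * Real.exp (H z))).hasSum (hTa · z)
    refine h1.trans ?_
    rw [tsum_mul_left]
    calc _ ≤ (1 + ‖z‖) * Real.exp (H z) * (4 * ∑' j, sq1 j) := by gcongr
      _ = _ := by ring
  · intro m z
    have h1 := (hsum (z + posN m)).tsum_eq_add_tsum_ite m
    have h2 : T m (z + posN m) = φ (labN m) z := by simp [hT]
    rw [h2] at h1
    simp only [h1, add_sub_cancel_left]
    have hinj : Function.Injective (fun m' : ℕ => (m' : ℤ) - m) := by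
      intro a b h
      simpa using h
    have hs' : Summable (fun m' : ℕ => ((1 + ‖z‖) ^ 4 * Real.exp (H z) / (labN m + 1)) *
        sq1 ((m' : ℤ) - m)) := (sq1_summable.comp_injective hinj).mul_left _
    have h3 := tsum_of_norm_bounded (f := fun m' => ite (m' = m) 0 (T m' (z + posN m)))
      hs'.hasSum ?_
    · refine h3.trans ?_
      rw [tsum_mul_left]
      have h5 : ∑' m' : ℕ, sq1 ((m' : ℤ) - m) ≤ ∑' j, sq1 j :=
        tsum_comp_le_tsum_of_inj sq1_summable sq1_nonneg hinj
      calc _ ≤ (1 + ‖z‖) ^ 4 * Real.exp (H z) / (labN m + 1) * ∑' j, sq1 j := by gcongr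
        _ = _ := by ring
    · intro m'
      split_ifs with hm
      · have := sq1_nonneg ((m' : ℤ) - m)
        simp only [norm_zero]
        positivity
      · have hsep := posN_sep hm
        refine (hφ _ _).trans ?_
        have e1 : H (z + posN m - posN m') = H z := by
          rw [hHs]; simpa using hper z (posN m)
        rw [e1]
        have h6 := one_add_mul_le z ((posN m : ℂ) - posN m')
        have h7 : ‖(posN m : ℂ) - posN m'‖ = |(posN m : ℝ) - posN m'| := by
          rw [← Real.norm_eq_abs, ← Complex.norm_real]; simp
        rw [h7, ← add_sub_assoc] at h6
        unfold sq1
        rw [div_mul_div_comm, mul_one, div_le_div_iff₀ (by positivity) (by positivity)]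
        set A := ‖z + posN m - posN m'‖
        set D := |(posN m : ℝ) - posN m'|
        set e := Real.exp (H z)
        have he : 0 ≤ e := (Real.exp_pos _).le
        have hA : 0 ≤ A := norm_nonneg _
        rw [Int.cast_abs] at hsep
        have hl0 : (0 : ℝ) ≤ labN m := Nat.cast_nonneg _
        have hl1 : (0 : ℝ) ≤ labN m' := Nat.cast_nonneg _
        set j : ℝ := |((((m' : ℤ) - m : ℤ)) : ℝ)|
        have hj : 0 ≤ j := abs_nonneg _
        have g1 : (labN m' : ℝ) + 1 ≤ 1 + D := by linarith
        have g2 : (labN m : ℝ) + 1 ≤ 1 + D := by linarith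
        have g3 : 1 + j ≤ 1 + D := by linarith
        calc (labN m' + 1) * e * ((labN m + 1) * (1 + j) ^ 2)
            ≤ (1 + D) * e * ((1 + D) * (1 + D) ^ 2) := by
              refine mul_le_mul (mul_le_mul_of_nonneg_right g1 he)
                (mul_le_mul g2 ?_ (by positivity) (by positivity)) (by positivity) (by positivity)
              gcongr
          _ = e * (1 + D) ^ 4 := by ring
          _ ≤ e * ((1 + ‖z‖) * (1 + A)) ^ 4 := by gcongr
          _ = _ := by ring

lemma labN_val (s q : ℕ) : labN (2 ^ s * (2 * q + 1) - 1) = s := by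
  have hp : 0 < 2 ^ s * (2 * q + 1) := by positivity
  unfold labN
  rw [Nat.sub_add_cancel hp, padicValNat.mul (by positivity) (by omega), padicValNat.prime_pow,
    padicValNat.eq_zero_of_not_dvd (by omega), add_zero]

lemma dens_pos (A : Set ℕ) (s : ℕ) (h : ∀ m, labN m = s → posN m ∈ A) : 0 < lowerDensity A := by
  classical
  set T : ℕ := 4 * 2 ^ s with hT
  have hT0 : 0 < T := by positivity
  have hcount : ∀ N : ℕ, N / (2 * T) ≤ ((Finset.range (N + 1)).filter (fun n => n ∈ A)).card := by
    intro N
    rw [← Finset.card_range (N / (2 * T))]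
    refine Finset.card_le_card_of_injOn (fun q => posN (2 ^ s * (2 * q + 1) - 1)) ?_ ?_
    · intro q hq
      have hq' : q < N / (2 * T) := by simpa using hq
      simp only [Finset.coe_filter, Finset.mem_range, Set.mem_setOf_eq]
      refine ⟨?_, h _ (labN_val s q)⟩
      have h1 := posN_le (2 ^ s * (2 * q + 1) - 1)
      have hp : 0 < 2 ^ s * (2 * q + 1) := by positivity
      have h2 : (q + 1) * (2 * T) ≤ N := by
        calc _ ≤ (N / (2 * T)) * (2 * T) := Nat.mul_le_mul_right _ hq'
          _ ≤ N := Nat.div_mul_le_self _ _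
      have h3 : T * (2 * q + 1) = 4 * (2 ^ s * (2 * q + 1)) := by rw [hT]; ring
      have h4 : T * (2 * q + 1) ≤ (q + 1) * (2 * T) := by nlinarith
      omega
    · intro q _ q' _ he
      have h1 := posN_strictMono.injective he
      have hp : 0 < 2 ^ s * (2 * q + 1) := by positivity
      have hp' : 0 < 2 ^ s * (2 * q' + 1) := by positivity
      have h2 : 2 ^ s * (2 * q + 1) = 2 ^ s * (2 * q' + 1) := by omega
      have h3 := Nat.eq_of_mul_eq_mul_left (by positivity) h2
      omega
  have hT' : (0:ℝ) < T := by exact_mod_cast hT0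
  refine lt_of_lt_of_le (by positivity : (0:ℝ) < 1 / (4 * T)) ?_
  unfold lowerDensity
  refine le_liminf_of_le ?_ ?_
  · refine IsBoundedUnder.isCoboundedUnder_ge ?_
    refine isBoundedUnder_of ⟨2, fun N => ?_⟩
    have h1 : ((Finset.range (N + 1)).filter (fun n => n ∈ A)).card ≤ N + 1 := by
      simpa using Finset.card_filter_le (Finset.range (N + 1)) (fun n => n ∈ A)
    have h1' : (((Finset.range (N + 1)).filter (fun n => n ∈ A)).card : ℝ) ≤ N + 1 := by
      exact_mod_cast h1
    rcases Nat.eq_zero_or_pos N with rfl | hN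
    · simp
    · have : (1:ℝ) ≤ N := by exact_mod_cast hN
      rw [div_le_iff₀ (by linarith)]
      convert h1'.trans (by linarith : (N:ℝ) + 1 ≤ 2 * N) using 4
  · filter_upwards [eventually_ge_atTop (4 * T)] with N hN
    have hN' : (4 * T : ℝ) ≤ N := by exact_mod_cast hN
    have h1 : ((N / (2 * T) : ℕ) : ℝ) ≤
        (((Finset.range (N + 1)).filter (fun n => n ∈ A)).card : ℝ) := by exact_mod_cast hcount N
    have h2 : N < (N / (2 * T) + 1) * (2 * T) := by
      have := Nat.lt_div_mul_add (a := N) (b := 2 * T) (by omega)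
      linarith
    have h2' : (N : ℝ) < ((N / (2 * T) : ℕ) + 1) * (2 * T) := by exact_mod_cast h2
    have h3 : (N : ℝ) / (4 * T) ≤ ((N / (2 * T) : ℕ) : ℝ) := by
      rw [div_le_iff₀ (by positivity)]
      nlinarith
    rw [le_div_iff₀ (by linarith)]
    have h4 : 1 / (4 * (T:ℝ)) * N = N / (4 * T) := by ring
    rw [h4]
    convert h3.trans h1 using 4

lemma segH_real {u v : ℂ} (hur : u.re = 0) (hvr : v.re = 0) (x : ℝ) : segH u v (x : ℂ) = 0 := by
  simp [segH, hur, hvr]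

lemma one_add_pow_bdd (k : ℕ) {a : ℝ} (ha : 0 < a) :
    ∃ C : ℝ, 0 ≤ C ∧ ∀ x : ℝ, 0 ≤ x → (1 + x) ^ k * Real.exp (-a * x) ≤ C := by
  obtain ⟨C, hC, h⟩ := pow_mul_exp_bdd k ha
  refine ⟨C * Real.exp a, by positivity, fun x hx => ?_⟩
  have := h (1 + x) (by linarith)
  calc (1 + x) ^ k * Real.exp (-a * x) = ((1 + x) ^ k * Real.exp (-a * (1 + x))) * Real.exp a := by
        rw [mul_assoc, ← Real.exp_add]; ring_nf
    _ ≤ _ := by gcongr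

/-- **Theorem 3.** If `K` contains two distinct purely imaginary points and `c > 1`,
there is a frequently Birkhoff-hypercyclic function in `Exp(K)` growing like
`O(1 + |x|^c)` on the real axis. -/
theorem stmt2 (K : Set ℂ) (hKc : IsCompact K) (hKconv : Convex ℝ K)
    (u v : ℂ) (hu : u ∈ K) (hv : v ∈ K) (huv : u ≠ v)
    (hur : u.re = 0) (hvr : v.re = 0)
    (c : ℝ) (hc : 1 < c) :
    ∃ f : ℂ → ℂ, FHCExp K f ∧ ∃ C : ℝ, ∀ x : ℝ, ‖f (x : ℂ)‖ ≤ C * (1 + |x| ^ c) := by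
  classical
  choose cc hcc0 hcc using dF_bound u v huv
  set φ : ℕ → ℂ → ℂ := fun s =>
    if cc s.unpair.1 ≤ s + 1 then dF u v s.unpair.1 else fun _ => 0 with hφd
  have hφ1 : ∀ s, Differentiable ℂ (φ s) := by
    intro s
    simp only [hφd]
    split_ifs
    · exact dF_diff _ _ _
    · exact differentiable_const 0
  have hφ2 : ∀ s z, ‖φ s z‖ ≤ (s + 1) * Real.exp (segH u v z) / (1 + ‖z‖) ^ 4 := by
    intro s z
    simp only [hφd]
    split_ifs with h
    · refine (hcc _ z).trans ?_
      gcongr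
    · rw [norm_zero]; positivity
  obtain ⟨f, hfd, ⟨C1, hC1⟩, ⟨C2, hC2⟩⟩ := construct φ hφ1 (segH u v) (segH_continuous u v)
    (fun z k => segH_per hur hvr z k) hφ2
  refine ⟨f, ⟨⟨hfd, fun n hn => ?_⟩, fun g hg n hn ε hε => ?_⟩, ?_⟩
  · have hn' : 0 < 1 / (n : ℝ) := by positivity
    obtain ⟨B, hB0, hB⟩ := one_add_pow_bdd 1 hn'
    refine ⟨|C1| * B, ?_⟩
    rintro _ ⟨z, rfl⟩
    have h1 := segH_wt_le hKc hu hv n z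
    have h2 := hB ‖z‖ (norm_nonneg z)
    rw [pow_one] at h2
    change ‖f z‖ * wt K n z ≤ _
    calc ‖f z‖ * wt K n z ≤ (|C1| * (1 + ‖z‖) * Real.exp (segH u v z)) * wt K n z := by
          refine mul_le_mul_of_nonneg_right ((hC1 z).trans ?_) (wt_pos K n z).le
          gcongr
          exact le_abs_self _
      _ = |C1| * ((1 + ‖z‖) * (Real.exp (segH u v z) * wt K n z)) := by ring
      _ ≤ |C1| * ((1 + ‖z‖) * Real.exp (-(1 / (n : ℝ)) * ‖z‖)) := by gcongr
      _ ≤ |C1| * B := by gcongr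
  · have hn' : 0 < 1 / (n : ℝ) := by positivity
    obtain ⟨B, hB0, hB⟩ := one_add_pow_bdd 4 hn'
    obtain ⟨i, hi⟩ := dF_dense hKc hKconv hu hv huv hn hg (ε := ε / 4) (by positivity)
    obtain ⟨t, ht⟩ := exists_nat_ge (max (cc i) (4 * (|C2| * B) / ε))
    set s := Nat.pair i t with hs
    have hts : (t : ℝ) ≤ s := by exact_mod_cast Nat.right_le_pair i t
    have hφs : φ s = dF u v i := by
      simp only [hφd]
      rw [if_pos]
      · rw [hs, Nat.unpair_pair]
      · have := (le_max_left (cc i) (4 * (|C2| * B) / ε)).trans ht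
        rw [hs, Nat.unpair_pair]
        rw [hs] at hts
        simp only
        linarith
    refine dens_pos _ s fun m hm => ?_
    change expNorm K n (fun z => f (z + (posN m : ℂ)) - g z) < ε
    refine lt_of_le_of_lt ?_ (half_lt_self hε)
    refine csSup_le (Set.range_nonempty _) ?_
    rintro _ ⟨z, rfl⟩
    change ‖f (z + (posN m : ℂ)) - g z‖ * wt K n z ≤ ε / 2
    have h1 := hC2 m z
    rw [hm, hφs] at h1
    have h2 := hi z
    have h3 : ‖f (z + (posN m : ℂ)) - g z‖ ≤
        ‖f (z + (posN m : ℂ)) - dF u v i z‖ + ‖dF u v i z - g z‖ := norm_sub_le_norm_sub_add_norm_sub _ _ _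
    have h4 : ‖f (z + (posN m : ℂ)) - dF u v i z‖ * wt K n z ≤ ε / 4 := by
      have hs0 : (0:ℝ) < s + 1 := by positivity
      calc _ ≤ (|C2| * (1 + ‖z‖) ^ 4 * Real.exp (segH u v z) / (s + 1)) * wt K n z := by
            refine mul_le_mul_of_nonneg_right (h1.trans ?_) (wt_pos K n z).le
            gcongr
            exact le_abs_self _
        _ = |C2| * ((1 + ‖z‖) ^ 4 * (Real.exp (segH u v z) * wt K n z)) / (s + 1) := by ring
        _ ≤ |C2| * ((1 + ‖z‖) ^ 4 * Real.exp (-(1 / (n : ℝ)) * ‖z‖)) / (s + 1) := by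
            gcongr
            exact segH_wt_le hKc hu hv n z
        _ ≤ |C2| * B / (s + 1) := by
            gcongr
            exact hB _ (norm_nonneg z)
        _ ≤ ε / 4 := by
            rw [div_le_iff₀ hs0]
            have h5 := (le_max_right (cc i) (4 * (|C2| * B) / ε)).trans ht
            rw [div_le_iff₀ hε] at h5
            nlinarith
    calc _ ≤ (‖f (z + (posN m : ℂ)) - dF u v i z‖ + ‖dF u v i z - g z‖) * wt K n z :=
          mul_le_mul_of_nonneg_right h3 (wt_pos K n z).le
      _ ≤ ε / 2 := by rw [add_mul]; linarith
  · refine ⟨2 * |C1|, fun x => ?_⟩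
    have h1 := hC1 x
    rw [segH_real hur hvr, Real.exp_zero, mul_one, Complex.norm_real, Real.norm_eq_abs] at h1
    have h2 : 1 + |x| ≤ 2 * (1 + |x| ^ c) := by
      have hp : 0 ≤ |x| ^ c := by positivity
      rcases le_or_gt |x| 1 with hx | hx
      · linarith
      · have := Real.self_le_rpow_of_one_le hx.le hc.le
        linarith
    calc _ ≤ C1 * (1 + |x|) := h1
      _ ≤ |C1| * (1 + |x|) := by gcongr; exact le_abs_self _
      _ ≤ |C1| * (2 * (1 + |x| ^ c)) := by gcongr
      _ = _ := by ring
end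

section
/- Let v, w ∈ ℂ with either v = w or Re(v) ≠ Re(w), and let K := [v,w] be the closed line segment joining v and w (so K is a singleton or a non-vertical line segment). Then no function f ∈ Exp(K) is frequently hypercyclic for T₁ on H(ℂ). -/
open Filter Complex

lemma aux_arg (z : ℂ) (hz : 0 ≤ z.re) :
    ‖z‖ ≤ 2 * (z.im * arg (z + 1)) + 2 * z.re + 1 := by
  have h1 : ‖z‖ ≤ z.re + |z.im| := by
    have := Complex.norm_le_abs_re_add_abs_im z
    rwa [abs_of_nonneg hz] at this
  have him : (z + 1).im = z.im := by simp
  have hre : (z + 1).re = z.re + 1 := by simp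
  have hprod : z.im * arg (z + 1) = |z.im| * |arg (z + 1)| := by
    rcases le_total 0 z.im with h | h
    · have : 0 ≤ arg (z + 1) := by rw [arg_nonneg_iff, him]; exact h
      rw [abs_of_nonneg h, abs_of_nonneg this]
    · rcases h.lt_or_eq with h' | h'
      · have : arg (z + 1) < 0 := by rw [arg_neg_iff, him]; exact h'
        rw [abs_of_neg h', abs_of_neg this]; ring
      · rw [h']; simp
  rw [hprod]
  have hpos : 0 ≤ |z.im| * |arg (z + 1)| := by positivity
  by_cases hc : |z.im| ≤ z.re + 1
  · linarith
  · push Not at hc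
    have hn : ‖z + 1‖ ≤ 2 * |z.im| := by
      have := Complex.norm_le_abs_re_add_abs_im (z + 1)
      rw [him, hre, abs_of_nonneg (by linarith : 0 ≤ z.re + 1)] at this
      linarith
    have hn0 : 0 < ‖z + 1‖ := by
      rw [norm_pos_iff]; intro h0; rw [h0] at hre; simp at hre; linarith
    have hs : |z.im| / ‖z + 1‖ ≤ |arg (z + 1)| := by
      have := Real.abs_sin_le_abs (x := arg (z + 1))
      rw [Complex.sin_arg, him, abs_div, abs_of_pos hn0] at this
      exact this
    have h2 : (1 : ℝ) / 2 ≤ |arg (z + 1)| := by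
      refine le_trans ?_ hs
      rw [le_div_iff₀ hn0]; linarith
    nlinarith [abs_nonneg z.im]

lemma aux_re (z : ℂ) (L : ℝ) :
    ((z + 1) * ((L : ℂ) - log (z + 1))).re =
      (z.re + 1) * (L - Real.log ‖z + 1‖) + z.im * arg (z + 1) := by
  simp [Complex.mul_re, Complex.log_re, Complex.log_im]

lemma aux_factor (l : ℕ → ℂ) (S : Finset ℕ) : ∀ (_ : Set.InjOn l S) (F : ℂ → ℂ)
    (_ : Differentiable ℂ F) (_ : ∀ k ∈ S, F (l k) = 0),
    ∃ G : ℂ → ℂ, Differentiable ℂ G ∧ ∀ z, F z = (∏ k ∈ S, (z - l k)) * G z := by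
  classical
  induction S using Finset.induction_on with
  | empty => intro _ F hF _; exact ⟨F, hF, by simp⟩
  | insert a s ha ih =>
    intro hinj F hF h0
    obtain ⟨G, hG, hFG⟩ := ih (hinj.mono (by simp)) F hF (fun k hk => h0 k (by simp [hk]))
    have hGa : G (l a) = 0 := by
      have h1 := hFG (l a)
      rw [h0 a (by simp)] at h1
      rcases mul_eq_zero.mp h1.symm with h2 | h2
      · obtain ⟨k, hk, hk2⟩ := Finset.prod_eq_zero_iff.mp h2
        have : a = k := hinj (by simp) (by simp [hk]) (sub_eq_zero.mp hk2)
        exact absurd (this ▸ hk) ha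
      · exact h2
    refine ⟨dslope G (l a), ?_, ?_⟩
    · rw [← differentiableOn_univ, Complex.differentiableOn_dslope (by simp)]
      exact hG.differentiableOn
    · intro z
      have := sub_smul_dslope G (l a) z
      rw [hGa, sub_zero, smul_eq_mul] at this
      rw [hFG z, Finset.prod_insert ha, ← this]; ring

lemma aux_sq (z l : ℂ) : ‖z + (starRingEnd ℂ) l‖ ^ 2 = ‖z - l‖ ^ 2 + 4 * z.re * l.re := by
  rw [Complex.sq_norm, Complex.sq_norm, Complex.normSq_apply, Complex.normSq_apply]
  simp; ring

lemma aux_le (u v a : ℝ) (hv : 0 ≤ v) (h : u ^ 2 ≤ v ^ 2 * (1 + 2 * a)) :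
    u ≤ v * Real.exp a := by
  have h1 : u ^ 2 ≤ (v * Real.exp a) ^ 2 := by
    calc u ^ 2 ≤ v ^ 2 * (1 + 2 * a) := h
      _ ≤ v ^ 2 * Real.exp (2 * a) := by
          gcongr
          linarith [Real.add_one_le_exp (2 * a)]
      _ = (v * Real.exp a) ^ 2 := by
          rw [mul_pow, ← Real.exp_nat_mul]; norm_num
  exact le_of_abs_le (abs_le_of_sq_le_sq h1 (by positivity))

lemma aux_max (F : ℂ → ℂ) (hF : Differentiable ℂ F) (l : ℕ → ℂ) (S : Finset ℕ)
    (hinj : Set.InjOn l S) (h0 : ∀ k ∈ S, F (l k) = 0) (R : ℝ) (hR : 0 < R)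
    (hre : ∀ k ∈ S, 0 < (l k).re) (hn : ∀ k ∈ S, ‖l k‖ ≤ R / 2) (hcard : (S.card : ℝ) ≤ R / 4)
    (C t ε : ℝ) (ht : 0 ≤ t) (hε : 0 < ε)
    (hb : ∀ z, ‖F z‖ ≤ C * Real.exp (t * max 0 z.re + ε * ‖z‖))
    (z₀ : ℂ) (hz₀ : 0 < z₀.re) (hz₀R : ‖z₀‖ < R) :
    ‖F z₀‖ ≤ C * Real.exp ((t + 1) * z₀.re +
      ε * (2 * ((z₀.re + 1) * Real.log (R + 1) + |z₀.im| * Real.pi) + 2 * z₀.re + 1)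
      - ∑ k ∈ S, 2 * z₀.re * (l k).re / ‖z₀ + (starRingEnd ℂ) (l k)‖ ^ 2) := by
  obtain ⟨G, hG, hFG⟩ := aux_factor l S hinj F hF h0
  have hC : 0 ≤ C := by
    have := (norm_nonneg _).trans (hb 0)
    by_contra h
    push Not at h
    have := mul_neg_of_neg_of_pos h (Real.exp_pos (t * max 0 (0:ℂ).re + ε * ‖(0:ℂ)‖))
    linarith
  set P : ℂ → ℂ := fun z => (ε : ℂ) * (2 * ((z + 1) * (((Real.log (R + 1) : ℝ) : ℂ) - log (z + 1)))
    + 2 * z + 1) + ((t : ℂ) + 1) * z with hP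
  have hPre : ∀ z, (P z).re = ε * (2 * ((z.re + 1) * (Real.log (R + 1) - Real.log ‖z + 1‖)
      + z.im * arg (z + 1)) + 2 * z.re + 1) + (t + 1) * z.re := by
    intro z
    rw [← aux_re, hP]
    have h2 : ∀ x : ℂ, ((2 : ℂ) * x).re = 2 * x.re := by intro x; simp
    simp only [add_re, re_ofReal_mul, h2, one_re]
    simp
  set Φ : ℂ → ℂ := fun z => G z * (∏ k ∈ S, (z + (starRingEnd ℂ) (l k))) * exp (-P z) with hΦ
  set U : Set ℂ := {z | 0 < z.re} ∩ Metric.ball 0 R with hU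
  have hUo : IsOpen U := (isOpen_lt continuous_const continuous_re).inter Metric.isOpen_ball
  have hcl : closure U ⊆ {z | 0 ≤ z.re} ∩ Metric.closedBall 0 R := by
    apply closure_minimal
    · intro z hz
      exact ⟨le_of_lt (show 0 < z.re from hz.1), Metric.ball_subset_closedBall hz.2⟩
    · exact (isClosed_le continuous_const continuous_re).inter Metric.isClosed_closedBall
  have hdiff : ∀ z ∈ {z : ℂ | 0 ≤ z.re}, DifferentiableAt ℂ Φ z := by
    intro z hz
    have hz' : 0 ≤ z.re := hz
    have hsl : z + 1 ∈ slitPlane := by left; simp; linarith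
    have hlog : DifferentiableAt ℂ (fun z : ℂ => log (z + 1)) z :=
      (differentiableAt_id.add_const 1).clog hsl
    have hPd : DifferentiableAt ℂ P z := by
      rw [hP]; fun_prop
    have hpr : DifferentiableAt ℂ (fun z => ∏ k ∈ S, (z + (starRingEnd ℂ) (l k))) z := by
      fun_prop
    exact ((hG z).mul hpr).mul hPd.neg.cexp
  have hdc : DiffContOnCl ℂ Φ U := by
    apply DifferentiableOn.diffContOnCl
    intro z hz
    exact (hdiff z (hcl hz).1).differentiableWithinAt
  have hfr : ∀ z ∈ frontier U, ‖Φ z‖ ≤ C := by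
    intro z hz
    rw [hUo.frontier_eq] at hz
    have hzc := hcl hz.1
    have hx : 0 ≤ z.re := hzc.1
    have hzR : ‖z‖ ≤ R := by simpa using hzc.2
    have hor : z.re = 0 ∨ ‖z‖ = R := by
      by_contra hh
      push Not at hh
      exact hz.2 ⟨lt_of_le_of_ne hx (Ne.symm hh.1), by simpa using lt_of_le_of_ne hzR hh.2⟩
    have hfac : ∀ k ∈ S, 0 < ‖z - l k‖ ∧
        ‖z + (starRingEnd ℂ) (l k)‖ ≤ ‖z - l k‖ * Real.exp (4 * z.re / R) := by
      intro k hk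
      rcases hor with h | h
      · constructor
        · rw [norm_pos_iff]; intro he
          have := hre k hk
          rw [← sub_eq_zero.mp he] at this; linarith
        · rw [h]
          have := aux_sq z (l k)
          rw [h] at this
          simp at this ⊢
          exact this.le
      · have hd : R / 2 ≤ ‖z - l k‖ := by
          have := norm_sub_norm_le z (l k)
          have := hn k hk
          linarith
        refine ⟨by linarith, aux_le _ _ _ (norm_nonneg _) ?_⟩
        rw [aux_sq]
        have hl : (l k).re ≤ R / 2 := (Complex.re_le_norm _).trans (hn k hk)
        have hd2 : (R / 2) ^ 2 ≤ ‖z - l k‖ ^ 2 := by gcongr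
        have h3 : 4 * z.re * (l k).re ≤ 2 * z.re * R := by nlinarith
        have h4 : 2 * z.re * R = (R / 2) ^ 2 * (2 * (4 * z.re / R)) := by field_simp; ring
        have h5 : (R / 2) ^ 2 * (2 * (4 * z.re / R)) ≤ ‖z - l k‖ ^ 2 * (2 * (4 * z.re / R)) := by
          gcongr
        nlinarith
    have hpp : 0 < ∏ k ∈ S, ‖z - l k‖ := Finset.prod_pos fun k hk => (hfac k hk).1
    have hprod : ∏ k ∈ S, ‖z + (starRingEnd ℂ) (l k)‖ ≤
        (∏ k ∈ S, ‖z - l k‖) * Real.exp z.re := by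
      calc ∏ k ∈ S, ‖z + (starRingEnd ℂ) (l k)‖
          ≤ ∏ k ∈ S, (‖z - l k‖ * Real.exp (4 * z.re / R)) :=
            Finset.prod_le_prod (fun k _ => norm_nonneg _) (fun k hk => (hfac k hk).2)
        _ = (∏ k ∈ S, ‖z - l k‖) * Real.exp (S.card * (4 * z.re / R)) := by
            rw [Finset.prod_mul_distrib, Finset.prod_const, ← Real.exp_nat_mul]
        _ ≤ _ := by
            gcongr
            calc (S.card : ℝ) * (4 * z.re / R) ≤ R / 4 * (4 * z.re / R) := by gcongr
              _ = z.re := by field_simp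
    have hFn : ‖F z‖ = (∏ k ∈ S, ‖z - l k‖) * ‖G z‖ := by
      rw [hFG z, norm_mul, norm_prod]
    have hGn : ‖G z‖ * (∏ k ∈ S, ‖z + (starRingEnd ℂ) (l k)‖) ≤ ‖F z‖ * Real.exp z.re := by
      calc _ ≤ ‖G z‖ * ((∏ k ∈ S, ‖z - l k‖) * Real.exp z.re) := by gcongr
        _ = _ := by rw [hFn]; ring
    have hPl : t * z.re + ε * ‖z‖ + z.re ≤ (P z).re := by
      rw [hPre]
      have h1 := aux_arg z hx
      have h2 : 0 ≤ Real.log (R + 1) - Real.log ‖z + 1‖ := by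
        rw [sub_nonneg]
        apply Real.log_le_log
        · rw [norm_pos_iff]; intro he
          have := congrArg Complex.re he
          simp at this; linarith
        · have := norm_add_le z 1
          simp at this; linarith
      have h3 : 0 ≤ (z.re + 1) * (Real.log (R + 1) - Real.log ‖z + 1‖) := by positivity
      have h4 : ε * ‖z‖ ≤ ε * (2 * ((z.re + 1) * (Real.log (R + 1) - Real.log ‖z + 1‖)
      + z.im * arg (z + 1)) + 2 * z.re + 1) := by
        gcongr; linarith
      linarith
    rw [hΦ]
    simp only [norm_mul, norm_prod, Complex.norm_exp, neg_re]
    calc _ ≤ ‖F z‖ * Real.exp z.re * Real.exp (-(P z).re) := by gcongr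
      _ ≤ (C * Real.exp (t * z.re + ε * ‖z‖)) * Real.exp z.re * Real.exp (-(P z).re) := by
          gcongr
          have := hb z
          rwa [max_eq_right hx] at this
      _ = C * Real.exp (t * z.re + ε * ‖z‖ + z.re - (P z).re) := by
          rw [sub_eq_add_neg, Real.exp_add (t * z.re + ε * ‖z‖ + z.re),
            Real.exp_add (t * z.re + ε * ‖z‖)]; ring
      _ ≤ C * 1 := by
          gcongr
          rw [Real.exp_le_one_iff]; linarith
      _ = C := mul_one C
  have hmain : ‖Φ z₀‖ ≤ C := by
    apply Complex.norm_le_of_forall_mem_frontier_norm_le (U := U) _ hdc hfr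
    · exact subset_closure ⟨hz₀, by simpa using hz₀R⟩
    · exact Metric.isBounded_ball.subset Set.inter_subset_right
  have hpos : ∀ k ∈ S, 0 < ‖z₀ + (starRingEnd ℂ) (l k)‖ := by
    intro k hk
    rw [norm_pos_iff]; intro he
    have := congrArg Complex.re he
    have := hre k hk
    simp at *; linarith
  have hfac : ∀ k ∈ S, ‖z₀ - l k‖ ≤ ‖z₀ + (starRingEnd ℂ) (l k)‖ *
      Real.exp (-(2 * z₀.re * (l k).re / ‖z₀ + (starRingEnd ℂ) (l k)‖ ^ 2)) := by
    intro k hk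
    apply aux_le _ _ _ (norm_nonneg _)
    have h1 := aux_sq z₀ (l k)
    have h2 := hpos k hk
    apply le_of_eq
    field_simp
    linarith
  have hPu : (P z₀).re ≤ (t + 1) * z₀.re +
      ε * (2 * ((z₀.re + 1) * Real.log (R + 1) + |z₀.im| * Real.pi) + 2 * z₀.re + 1) := by
    rw [hPre]
    have h1 : z₀.im * arg (z₀ + 1) ≤ |z₀.im| * Real.pi := by
      calc _ ≤ |z₀.im * arg (z₀ + 1)| := le_abs_self _
        _ = |z₀.im| * |arg (z₀ + 1)| := abs_mul _ _
        _ ≤ _ := by gcongr; exact Complex.abs_arg_le_pi _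
    have h2 : 0 ≤ Real.log ‖z₀ + 1‖ := by
      apply Real.log_nonneg
      have := Complex.re_le_norm (z₀ + 1)
      simp at this; linarith
    have h3 : (z₀.re + 1) * (Real.log (R + 1) - Real.log ‖z₀ + 1‖) ≤
        (z₀.re + 1) * Real.log (R + 1) := by gcongr; linarith
    have : ε * (2 * ((z₀.re + 1) * (Real.log (R + 1) - Real.log ‖z₀ + 1‖)
      + z₀.im * arg (z₀ + 1)) + 2 * z₀.re + 1) ≤ ε * (2 * ((z₀.re + 1) * Real.log (R + 1)
      + |z₀.im| * Real.pi) + 2 * z₀.re + 1) := by gcongr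
    linarith
  set Sg := ∑ k ∈ S, 2 * z₀.re * (l k).re / ‖z₀ + (starRingEnd ℂ) (l k)‖ ^ 2 with hSg
  have hGP : ‖G z₀‖ * (∏ k ∈ S, ‖z₀ + (starRingEnd ℂ) (l k)‖) ≤ C * Real.exp (P z₀).re := by
    rw [hΦ] at hmain
    simp only [norm_mul, norm_prod, Complex.norm_exp, neg_re] at hmain
    rwa [Real.exp_neg, ← div_eq_mul_inv, div_le_iff₀ (Real.exp_pos _)] at hmain
  calc ‖F z₀‖ = (∏ k ∈ S, ‖z₀ - l k‖) * ‖G z₀‖ := by rw [hFG z₀, norm_mul, norm_prod]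
    _ ≤ (∏ k ∈ S, (‖z₀ + (starRingEnd ℂ) (l k)‖ *
      Real.exp (-(2 * z₀.re * (l k).re / ‖z₀ + (starRingEnd ℂ) (l k)‖ ^ 2)))) * ‖G z₀‖ := by
        gcongr with k hk
        exact hfac k hk
    _ = ‖G z₀‖ * (∏ k ∈ S, ‖z₀ + (starRingEnd ℂ) (l k)‖) * Real.exp (-Sg) := by
        rw [Finset.prod_mul_distrib, ← Real.exp_sum, Finset.sum_neg_distrib]; ring
    _ ≤ C * Real.exp (P z₀).re * Real.exp (-Sg) := by gcongr
    _ = C * Real.exp ((P z₀).re - Sg) := by rw [sub_eq_add_neg, Real.exp_add]; ring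
    _ ≤ _ := by gcongr


open scoped Classical in
lemma aux_sum (A : Set ℕ) (d : ℝ) (hd : 0 < d) (n0 : ℕ)
    (h : ∀ N ≥ n0, d * N ≤ (((Finset.range (N + 1)).filter (fun n => n ∈ A)).card : ℝ)) :
    ∃ q : ℕ, 2 ≤ q ∧ ∃ j0 : ℕ, ∀ j : ℕ,
      (j : ℝ) / q ≤ ∑ k ∈ (Finset.Icc 1 (q ^ (j0 + j))).filter (fun n => n ∈ A), (1 : ℝ) / k := by
  obtain ⟨q0, hq0⟩ := exists_nat_ge (3 / d)
  set q := q0 + 2 with hq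
  have hq2 : 2 ≤ q := by omega
  have hqd : 3 ≤ d * q := by
    rw [div_le_iff₀ hd] at hq0
    rw [hq]; push_cast; nlinarith
  refine ⟨q, hq2, n0, ?_⟩
  intro j
  induction j with
  | zero => simp; positivity
  | succ j ih =>
    set M := q ^ (n0 + j) with hM
    have hM1 : 1 ≤ M := Nat.one_le_pow _ _ (by omega)
    have hMq : q ^ (n0 + (j + 1)) = M * q := by rw [hM, ← add_assoc, pow_succ]
    have hn0M : n0 ≤ M * q := by
      have : n0 + j < q ^ (n0 + j) := Nat.lt_pow_self (by omega)
      nlinarith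
    rw [hMq]
    have hsplit : (Finset.Icc 1 (M * q)).filter (fun n => n ∈ A) =
        (Finset.Icc 1 M).filter (fun n => n ∈ A) ∪ (Finset.Ioc M (M * q)).filter (fun n => n ∈ A) := by
      ext k
      have : M ≤ M * q := by nlinarith
      simp only [Finset.mem_union, Finset.mem_filter, Finset.mem_Icc, Finset.mem_Ioc]
      constructor
      · rintro ⟨⟨a, b⟩, c⟩
        by_cases hk : k ≤ M
        · exact Or.inl ⟨⟨a, hk⟩, c⟩
        · exact Or.inr ⟨⟨by omega, b⟩, c⟩
      · rintro (⟨⟨a, b⟩, c⟩ | ⟨⟨a, b⟩, c⟩)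
        · exact ⟨⟨a, by omega⟩, c⟩
        · exact ⟨⟨by omega, b⟩, c⟩
    have hdis : Disjoint ((Finset.Icc 1 M).filter (fun n => n ∈ A))
        ((Finset.Ioc M (M * q)).filter (fun n => n ∈ A)) := by
      rw [Finset.disjoint_left]
      intro k h1 h2
      simp at h1 h2
      omega
    rw [hsplit, Finset.sum_union hdis]
    set B := (Finset.Ioc M (M * q)).filter (fun n => n ∈ A) with hB
    have hcard : (M : ℝ) ≤ B.card := by
      have h1 := h (M * q) hn0M
      have h2 : ((Finset.range (M * q + 1)).filter (fun n => n ∈ A)).card ≤ (M + 1) + B.card := by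
        calc _ ≤ (Finset.range (M + 1) ∪ B).card := by
              apply Finset.card_le_card
              intro k hk
              simp only [hB, Finset.mem_union, Finset.mem_filter, Finset.mem_range, Finset.mem_Ioc] at hk ⊢
              by_cases hk2 : k < M + 1
              · exact Or.inl hk2
              · exact Or.inr ⟨⟨by omega, by omega⟩, hk.2⟩
          _ ≤ _ := by
              refine (Finset.card_union_le _ _).trans ?_
              simp
      have h3 : (((Finset.range (M * q + 1)).filter (fun n => n ∈ A)).card : ℝ) ≤ (M + 1) + B.card := by
        exact_mod_cast h2
      have h4 : (1 : ℝ) ≤ M := by exact_mod_cast hM1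
      push_cast at h1
      nlinarith
    have hq0' : (0 : ℝ) < q := by positivity
    have hM0 : (0 : ℝ) < M := by exact_mod_cast hM1
    have hBs : (1 : ℝ) / q ≤ ∑ k ∈ B, (1 : ℝ) / k := by
      calc (1 : ℝ) / q = M * (1 / (M * q)) := by field_simp
        _ ≤ B.card * (1 / (M * q)) := by gcongr
        _ = ∑ k ∈ B, (1 : ℝ) / (M * q) := by simp
        _ ≤ _ := by
          apply Finset.sum_le_sum
          intro k hk
          simp only [hB, Finset.mem_filter, Finset.mem_Ioc] at hk
          have hk0 : (0 : ℝ) < k := by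
            have : 0 < k := by omega
            exact_mod_cast this
          have : (k : ℝ) ≤ M * q := by exact_mod_cast hk.1.2
          gcongr
    push_cast
    rw [add_div]
    linarith

open scoped Classical in
lemma aux_dens (A : Set ℕ) (h : 0 < lowerDensity A) : ∃ d : ℝ, 0 < d ∧ ∃ n0 : ℕ,
    ∀ N ≥ n0, d * N ≤ (((Finset.range (N + 1)).filter (fun n => n ∈ A)).card : ℝ) := by
  refine ⟨lowerDensity A / 2, by linarith, ?_⟩
  have h1 : lowerDensity A / 2 < lowerDensity A := by linarith
  have h2 := Filter.eventually_lt_of_lt_liminf h1 ⟨0, by simp; exact ⟨0, fun b _ => by positivity⟩⟩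
  obtain ⟨n0, hn0⟩ := eventually_atTop.mp h2
  refine ⟨n0 + 1, fun N hN => ?_⟩
  have h3 := hn0 N (by omega)
  have hN0 : (0 : ℝ) < N := by
    have : 0 < N := by omega
    exact_mod_cast this
  rw [lt_div_iff₀ hN0] at h3
  exact h3.le

lemma aux_root (f : ℂ → ℂ) (hf : Differentiable ℂ f) (a : ℂ) (r : ℝ) (hr : 0 < r)
    (h : ∀ z : ℂ, ‖z‖ ≤ r → ‖f (z + a) - z‖ < r / 8) : ∃ m, ‖m - a‖ ≤ r ∧ f m = 0 := by
  have hfa : ‖f a‖ < r / 8 := by simpa using h 0 (by simpa using hr.le)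
  have hdc : DiffContOnCl ℂ f (Metric.ball a r) := hf.diffContOnCl
  have hs := hdc.ball_subset_image_closedBall hr (ε := r / 2) (by
    intro z hz
    have hz' : ‖z - a‖ = r := by simpa [dist_eq_norm] using hz
    have h1 := h (z - a) hz'.le
    rw [sub_add_cancel] at h1
    have h2 : ‖z - a‖ ≤ ‖f z - f a‖ + ‖f a‖ + ‖f z - (z - a)‖ := by
      calc ‖z - a‖ = ‖(f z - f a) + f a - (f z - (z - a))‖ := by congr 1; ring
        _ ≤ _ := (norm_sub_le _ _).trans (by gcongr; exact norm_add_le _ _)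
    linarith) (by
    intro hev
    have hev' : f =ᶠ[nhds a] fun _ => f a := by
      filter_upwards [hev] with z hz using not_not.mp hz
    have han : AnalyticOnNhd ℂ f Set.univ := hf.differentiableOn.analyticOnNhd isOpen_univ
    have heq := han.eq_of_eventuallyEq analyticOnNhd_const hev'
    have h1 := h (r : ℂ) (by simp [abs_of_pos hr])
    rw [congrFun heq ((r : ℂ) + a)] at h1
    have h2 : ‖(r : ℂ)‖ ≤ ‖f a‖ + ‖f a - r‖ := by
      calc ‖(r : ℂ)‖ = ‖f a - (f a - r)‖ := by congr 1; ring
        _ ≤ _ := norm_sub_le _ _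
    rw [Complex.norm_real, Real.norm_of_nonneg hr.le] at h2
    linarith)
  have : (0 : ℂ) ∈ Metric.ball (f a) (r / 2 / 2) := by
    simp; linarith
  obtain ⟨m, hm, hm0⟩ := hs this
  exact ⟨m, by simpa [dist_eq_norm] using hm, hm0⟩

lemma aux_dir (v w : ℂ) (h : v = w ∨ v.re < w.re) :
    ∃ (W : ℂ) (t : ℝ), ‖W‖ = 1 ∧ 0 < W.re ∧ 0 ≤ t ∧ w - v = t * W := by
  rcases h with h | h
  · exact ⟨1, 0, by simp, by simp, le_rfl, by simp [h]⟩
  · have hne : 0 < ‖w - v‖ := by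
      rw [norm_pos_iff, sub_ne_zero]; intro he; rw [he] at h; exact lt_irrefl _ h
    have hne' : ((‖w - v‖ : ℝ) : ℂ) ≠ 0 := by exact_mod_cast hne.ne'
    refine ⟨((‖w - v‖⁻¹ : ℝ) : ℂ) * (w - v), ‖w - v‖, ?_, ?_, hne.le, ?_⟩
    · rw [norm_mul, Complex.norm_real, norm_inv, norm_norm, inv_mul_cancel₀ hne.ne']
    · rw [re_ofReal_mul, sub_re]
      have : 0 < w.re - v.re := by linarith
      positivity
    · rw [ofReal_inv, mul_inv_cancel_left₀ hne']

lemma aux_supp (v w W : ℂ) (t : ℝ) (ht : 0 ≤ t) (h : w - v = t * W) (z : ℂ) :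
    suppFn (segment ℝ v w) z ≤ (z * v).re + t * max 0 (z * W).re := by
  apply csSup_le
  · exact ⟨_, ⟨v, left_mem_segment ℝ v w, rfl⟩⟩
  · rintro _ ⟨u, hu, rfl⟩
    rw [segment_eq_image'] at hu
    obtain ⟨θ, ⟨h0, h1⟩, rfl⟩ := hu
    have : z * (v + θ • (w - v)) = z * v + ((θ * t : ℝ) : ℂ) * (z * W) := by
      rw [h, Complex.real_smul]; push_cast; ring
    simp only [this, add_re, re_ofReal_mul]
    have h2 : θ * t * (z * W).re ≤ θ * t * max 0 (z * W).re := by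
      gcongr; exact le_max_right _ _
    have h3 : θ * t * max 0 (z * W).re ≤ 1 * t * max 0 (z * W).re := by
      gcongr
    linarith

open scoped Classical in
lemma aux_core (F : ℂ → ℂ) (hF : Differentiable ℂ F) (t : ℝ) (ht : 0 ≤ t)
    (hb : ∀ ε > 0, ∃ C, ∀ z, ‖F z‖ ≤ C * Real.exp (t * max 0 z.re + ε * ‖z‖))
    (A : Set ℕ) (l : ℕ → ℂ) (c : ℝ) (hc : 0 < c) (hinj : Set.InjOn l A)
    (h0 : ∀ k ∈ A, F (l k) = 0) (hre : ∀ k ∈ A, 1 ≤ k → k * c / 2 ≤ (l k).re)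
    (hn : ∀ k ∈ A, 1 ≤ k → ‖l k‖ ≤ 2 * k) (q : ℕ) (hq : 2 ≤ q) (j0 : ℕ)
    (hsum : ∀ j : ℕ, (j : ℝ) / q ≤
      ∑ k ∈ (Finset.Icc 1 (q ^ (j0 + j))).filter (fun n => n ∈ A), (1 : ℝ) / k)
    (z₀ : ℂ) (hz₀ : 0 < z₀.re) : F z₀ = 0 := by
  set c1 := z₀.re * c / (‖z₀‖ + 2) ^ 2 with hc1
  have hc1p : 0 < c1 := by positivity
  have hq0 : (0 : ℝ) < q := by positivity
  have hlq : 0 < Real.log q := Real.log_pos (by exact_mod_cast hq)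
  set κ := c1 / (2 * q) with hκ
  have hκp : 0 < κ := by positivity
  set ε := κ / (2 * (z₀.re + 1) * Real.log q) with hε
  have hεp : 0 < ε := by positivity
  have hεκ : ε * (2 * (z₀.re + 1) * Real.log q) = κ := by
    rw [hε]; field_simp
  obtain ⟨C, hC⟩ := hb ε hεp
  have hC0 : 0 ≤ C := by
    by_contra h
    push Not at h
    have h1 := (norm_nonneg _).trans (hC 0)
    have := mul_neg_of_neg_of_pos h (Real.exp_pos (t * max 0 (0:ℂ).re + ε * ‖(0:ℂ)‖))
    linarith
  set B := (t + 1) * z₀.re + ε * (2 * ((z₀.re + 1) * (Real.log 5 + j0 * Real.log q)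
    + |z₀.im| * Real.pi) + 2 * z₀.re + 1) with hB
  have key : ∀ᶠ j : ℕ in atTop, ‖F z₀‖ ≤ C * Real.exp (B + -(κ * j)) := by
    obtain ⟨J, hJ⟩ := exists_nat_ge ‖z₀‖
    filter_upwards [eventually_ge_atTop J] with j hj
    set N := q ^ (j0 + j) with hN
    have hNj : j0 + j < N := Nat.lt_pow_self (by omega)
    have hN1 : 1 ≤ N := by omega
    have hN1' : (1 : ℝ) ≤ N := by exact_mod_cast hN1
    set S := (Finset.Icc 1 N).filter (fun n => n ∈ A) with hS
    have hSm : ∀ k ∈ S, k ∈ A ∧ 1 ≤ k ∧ k ≤ N := by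
      intro k hk
      simp only [hS, Finset.mem_filter, Finset.mem_Icc] at hk
      exact ⟨hk.2, hk.1.1, hk.1.2⟩
    have hre' : ∀ k ∈ S, 0 < (l k).re := by
      intro k hk
      obtain ⟨h1, h2, h3⟩ := hSm k hk
      have : (0 : ℝ) < k := by exact_mod_cast h2
      exact lt_of_lt_of_le (by positivity) (hre k h1 h2)
    have hm := aux_max F hF l S (hinj.mono fun k hk => (hSm k hk).1)
      (fun k hk => h0 k (hSm k hk).1) (4 * N) (by positivity) hre'
      (by
        intro k hk
        obtain ⟨h1, h2, h3⟩ := hSm k hk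
        have : (k : ℝ) ≤ N := by exact_mod_cast h3
        linarith [hn k h1 h2])
      (by
        have : S.card ≤ N := by
          refine (Finset.card_filter_le _ _).trans ?_
          simp
        have : (S.card : ℝ) ≤ N := by exact_mod_cast this
        linarith)
      C t ε ht hεp hC z₀ hz₀ (by
        have : J < N := by omega
        have : (J : ℝ) < N := by exact_mod_cast this
        linarith)
    refine hm.trans ?_
    have hlog : Real.log (4 * N + 1) ≤ Real.log 5 + (j0 + j) * Real.log q := by
      calc Real.log (4 * N + 1) ≤ Real.log (5 * N) := by
            apply Real.log_le_log <;> linarith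
        _ = Real.log 5 + (j0 + j) * Real.log q := by
            rw [Real.log_mul (by norm_num) (by positivity), hN]
            push_cast
            rw [Real.log_pow]; push_cast; ring
    have hs : c1 * (j / q) ≤
        ∑ k ∈ S, 2 * z₀.re * (l k).re / ‖z₀ + (starRingEnd ℂ) (l k)‖ ^ 2 := by
      calc c1 * (j / q) ≤ c1 * ∑ k ∈ S, (1 : ℝ) / k := by gcongr; exact hsum j
        _ = ∑ k ∈ S, c1 * ((1 : ℝ) / k) := Finset.mul_sum _ _ _
        _ ≤ _ := by
          apply Finset.sum_le_sum
          intro k hk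
          obtain ⟨h1, h2, h3⟩ := hSm k hk
          have hk1 : (1 : ℝ) ≤ k := by exact_mod_cast h2
          have hpos : 0 < ‖z₀ + (starRingEnd ℂ) (l k)‖ := by
            rw [norm_pos_iff]; intro he
            have h5 := congrArg Complex.re he
            have h6 := hre' k hk
            simp at h5; linarith
          have hup : ‖z₀ + (starRingEnd ℂ) (l k)‖ ≤ (‖z₀‖ + 2) * k := by
            have h5 := norm_add_le z₀ ((starRingEnd ℂ) (l k))
            rw [RCLike.norm_conj] at h5
            have h6 := hn k h1 h2
            nlinarith [norm_nonneg z₀]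
          calc c1 * ((1 : ℝ) / k) = 2 * z₀.re * (k * c / 2) / ((‖z₀‖ + 2) * k) ^ 2 := by
                rw [hc1]; field_simp
            _ ≤ 2 * z₀.re * (l k).re / ‖z₀ + (starRingEnd ℂ) (l k)‖ ^ 2 := by
                have h7 := hre k h1 h2
                have h8 := hre' k hk
                gcongr
    have h2k : c1 * (j / q) = 2 * (κ * j) := by rw [hκ]; field_simp
    have hlog2 : ε * (2 * ((z₀.re + 1) * Real.log (4 * N + 1) + |z₀.im| * Real.pi)
        + 2 * z₀.re + 1) ≤ ε * (2 * ((z₀.re + 1) * (Real.log 5 + (j0 + j) * Real.log q)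
        + |z₀.im| * Real.pi) + 2 * z₀.re + 1) := by gcongr
    have h3k : ε * (2 * ((z₀.re + 1) * (Real.log 5 + (j0 + j) * Real.log q)
        + |z₀.im| * Real.pi) + 2 * z₀.re + 1) = ε * (2 * ((z₀.re + 1) * (Real.log 5 +
        j0 * Real.log q) + |z₀.im| * Real.pi) + 2 * z₀.re + 1) + κ * j := by
      rw [← hεκ]; ring
    gcongr
    linarith
  have hlim : Tendsto (fun j : ℕ => C * Real.exp (B + -(κ * j))) atTop (nhds (C * 0)) := by
    apply Tendsto.const_mul
    apply Real.tendsto_exp_atBot.comp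
    apply tendsto_atBot_add_const_left
    apply tendsto_neg_atTop_atBot.comp
    exact tendsto_natCast_atTop_atTop.const_mul_atTop hκp
  have := ge_of_tendsto hlim key
  rw [mul_zero] at this
  exact norm_le_zero_iff.mp this

lemma aux_final (v w : ℂ) (h : v = w ∨ v.re < w.re)
    (f : ℂ → ℂ) (hf : MemExp (segment ℝ v w) f) : ¬ FHCEnt f := by
  classical
  intro hfh
  obtain ⟨W, t, hW, hWre, ht, hvw⟩ := aux_dir v w h
  have hWW : (starRingEnd ℂ) W * W = 1 := by
    rw [mul_comm, Complex.mul_conj, Complex.normSq_eq_norm_sq, hW]; simp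
  have hfd : Differentiable ℂ f := hf.1
  set F : ℂ → ℂ := fun z => f (z * (starRingEnd ℂ) W) * exp (-(z * (starRingEnd ℂ) W * v)) with hFdef
  have hF : Differentiable ℂ F := by
    rw [hFdef]
    fun_prop
  have hFm : ∀ m, F (m * W) = f m * exp (-(m * v)) := by
    intro m
    have : m * W * (starRingEnd ℂ) W = m := by rw [mul_assoc, mul_comm W, hWW, mul_one]
    simp only [hFdef, this]
  have hb : ∀ ε > 0, ∃ C, ∀ z, ‖F z‖ ≤ C * Real.exp (t * max 0 z.re + ε * ‖z‖) := by
    intro ε hε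
    obtain ⟨n, hn⟩ := exists_nat_one_div_lt hε
    obtain ⟨M, hM⟩ := hf.2 (n + 1) (by omega)
    refine ⟨M, fun ζ => ?_⟩
    set z := ζ * (starRingEnd ℂ) W with hz
    have hzW : z * W = ζ := by rw [hz, mul_assoc, hWW, mul_one]
    have hzn : ‖z‖ = ‖ζ‖ := by rw [hz, norm_mul, RCLike.norm_conj, hW, mul_one]
    have h1 : ‖f z‖ * Real.exp (-(suppFn (segment ℝ v w) z) - ‖z‖ / ((n + 1 : ℕ) : ℝ)) ≤ M :=
      hM ⟨z, rfl⟩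
    have hM0 : 0 ≤ M := le_trans (by positivity) h1
    have h2 := aux_supp v w W t ht hvw z
    rw [hzW] at h2
    have h3 : ‖z‖ / ((n + 1 : ℕ) : ℝ) ≤ ε * ‖ζ‖ := by
      rw [← hzn, div_eq_inv_mul]
      gcongr
      push_cast
      rw [← one_div]; exact hn.le
    have h4 : ‖F ζ‖ = ‖f z‖ * Real.exp (-(z * v).re) := by
      simp only [hFdef, norm_mul, Complex.norm_exp, neg_re, ← hz]
    rw [h4]
    calc ‖f z‖ * Real.exp (-(z * v).re) =
        (‖f z‖ * Real.exp (-(suppFn (segment ℝ v w) z) - ‖z‖ / ((n + 1 : ℕ) : ℝ))) *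
        Real.exp (suppFn (segment ℝ v w) z + ‖z‖ / ((n + 1 : ℕ) : ℝ) - (z * v).re) := by
          rw [mul_assoc ‖f z‖, ← Real.exp_add]; congr 2; ring
      _ ≤ M * Real.exp (t * max 0 ζ.re + ε * ‖ζ‖) := by
          apply mul_le_mul h1 _ (Real.exp_pos _).le hM0
          apply Real.exp_le_exp.mpr
          linarith
  set c := W.re with hc
  have hc1 : c ≤ 1 := by rw [← hW]; exact Complex.re_le_norm W
  set r := c / 4 with hr
  have hr0 : 0 < r := by positivity
  set A : Set ℕ := {k : ℕ | ∀ z : ℂ, ‖z‖ ≤ r → ‖f (z + (k : ℂ)) - z‖ < r / 8} with hA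
  have hAd : 0 < lowerDensity A := hfh.2 (fun z => z) differentiable_id r hr0 (r / 8) (by positivity)
  have hex : ∀ k : ℕ, ∃ m : ℂ, k ∈ A → ‖m - k‖ ≤ r ∧ f m = 0 := by
    intro k
    by_cases hk : k ∈ A
    · obtain ⟨m, hm⟩ := aux_root f hfd k r hr0 hk
      exact ⟨m, fun _ => hm⟩
    · exact ⟨0, fun h => absurd h hk⟩
  choose m hm using hex
  -- a point where `F` does not vanish
  have hone : ∃ k : ℕ, 1 ≤ k ∧ f k ≠ 0 := by
    have hd := hfh.2 (fun _ => 1) (differentiable_const 1) 1 one_pos (1 / 2) (by norm_num)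
    obtain ⟨d, hd, n0, hn0⟩ := aux_dens _ hd
    obtain ⟨q, hq, j0, hj⟩ := aux_sum _ d hd n0 hn0
    have h1 := hj 1
    have h2 : 0 < ((1 : ℕ) : ℝ) / q := by positivity
    obtain ⟨k, hk, -⟩ := Finset.exists_ne_zero_of_sum_ne_zero (h2.trans_le h1).ne'
    rw [Finset.mem_filter, Finset.mem_Icc] at hk
    refine ⟨k, hk.1.1, fun h0 => ?_⟩
    have h3 := hk.2 0 (by simp)
    rw [zero_add, h0] at h3
    norm_num at h3
  obtain ⟨k0, hk0, hfk0⟩ := hone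
  obtain ⟨d, hd, n0, hn0⟩ := aux_dens _ hAd
  obtain ⟨q, hq, j0, hj⟩ := aux_sum _ d hd n0 hn0
  have hW0 : W ≠ 0 := by intro h0; rw [h0] at hW; simp at hW
  have hzero := aux_core F hF t ht hb A (fun k => m k * W) c hWre
    (by
      intro j hj k hk hjk
      have h1 : m j = m k := mul_right_cancel₀ hW0 hjk
      have h2 := (hm j hj).1
      have h3 := (hm k hk).1
      have h4 : ‖(j : ℂ) - k‖ < 1 := by
        calc ‖(j : ℂ) - k‖ = ‖(m k - k) - (m j - j)‖ := by rw [h1]; congr 1; ring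
          _ ≤ ‖m k - k‖ + ‖m j - j‖ := norm_sub_le _ _
          _ < 1 := by linarith
      have h5 : ((j : ℂ) - k) = (((j : ℤ) - (k : ℤ) : ℤ) : ℂ) := by push_cast; ring
      rw [h5, Complex.norm_intCast] at h4
      have h6 : |(j : ℤ) - k| < 1 := by exact_mod_cast h4
      rw [Int.abs_lt_one_iff] at h6
      omega)
    (by
      intro k hk
      simp only [hFm, (hm k hk).2, zero_mul])
    (by
      intro k hk hk1
      have hk1' : (1 : ℝ) ≤ k := by exact_mod_cast hk1
      have h1 : m k * W = (k : ℝ) * W + (m k - k) * W := by push_cast; ring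
      have h2 : |((m k - k) * W).re| ≤ r := by
        refine (Complex.abs_re_le_norm _).trans ?_
        rw [norm_mul, hW, mul_one]; exact (hm k hk).1
      simp only [h1, add_re, re_ofReal_mul]
      have := neg_le_of_abs_le h2
      nlinarith)
    (by
      intro k hk hk1
      have hk1' : (1 : ℝ) ≤ k := by exact_mod_cast hk1
      rw [norm_mul, hW, mul_one]
      calc ‖m k‖ = ‖(k : ℂ) + (m k - k)‖ := by congr 1; ring
        _ ≤ ‖(k : ℂ)‖ + ‖m k - k‖ := norm_add_le _ _
        _ ≤ 2 * k := by
          rw [Complex.norm_natCast]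
          linarith [(hm k hk).1])
    q hq j0 hj ((k0 : ℂ) * W) (by
      have : (0 : ℝ) < k0 := by exact_mod_cast hk0
      have h1 : ((k0 : ℂ) * W).re = k0 * W.re := by simp
      rw [h1]; positivity)
  rw [hFm] at hzero
  rcases mul_eq_zero.mp hzero with h1 | h1
  · exact hfk0 h1
  · exact Complex.exp_ne_zero _ h1

/-- **Theorem 6.** If `K = [v,w]` is a singleton or a non-vertical line segment, then no
function of `Exp(K)` is frequently hypercyclic for `T₁` on `H(ℂ)`. -/
theorem stmt4 (v w : ℂ) (h : v = w ∨ v.re ≠ w.re)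
    (f : ℂ → ℂ) (hf : MemExp (segment ℝ v w) f) : ¬ FHCEnt f := by
  rcases h with h | h
  · exact aux_final v w (Or.inl h) f hf
  · rcases lt_or_gt_of_ne h with h | h
    · exact aux_final v w (Or.inr h) f hf
    · rw [segment_symm] at hf
      exact aux_final w v (Or.inr h) f hf
end

section
/- Let f be an entire function of exponential type, let K ⊆ ℂ be a compact convex set containing the origin, and let A ⊆ ℂ be a bounded infinite set such that for every α ∈ A the function f_α defined by f_α(z) := f(αz) belongs to Exp(K). Then the linear span of {f_α : α ∈ A} is dense in Exp(K) — meaning that for every g ∈ Exp(K), every n ∈ ℕ and every ε > 0 there is a finite linear combination h of the functions f_α (α ∈ A) with ‖g − h‖_{K,n} < ε — if and only if f^{(k)}(0) ≠ 0 for every integer k ≥ 0. -/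
open Filter Complex

open scoped BoundedContinuousFunction Topology

/-- The weight `exp (-H_K z - |z|/n)`. -/
noncomputable def wtR (K : Set ℂ) (n : ℕ) (z : ℂ) : ℝ :=
  Real.exp (-(suppFn K z) - ‖z‖ / n)

lemma wtR_pos (K : Set ℂ) (n : ℕ) (z : ℂ) : 0 < wtR K n z := Real.exp_pos _

section supp

lemma supp_bdd {K : Set ℂ} {R : ℝ} (hR : ∀ u ∈ K, ‖u‖ ≤ R) (z : ℂ) :
    BddAbove ((fun u => (z * u).re) '' K) := by
  refine ⟨‖z‖ * R, ?_⟩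
  rintro _ ⟨u, hu, rfl⟩
  calc (z * u).re ≤ ‖z * u‖ := Complex.re_le_norm _
    _ = ‖z‖ * ‖u‖ := norm_mul _ _
    _ ≤ _ := by gcongr; exact hR u hu

lemma le_supp {K : Set ℂ} {R : ℝ} (hR : ∀ u ∈ K, ‖u‖ ≤ R) (z : ℂ) {u : ℂ} (hu : u ∈ K) :
    (z * u).re ≤ suppFn K z :=
  le_csSup (supp_bdd hR z) ⟨u, hu, rfl⟩

lemma supp_nonneg {K : Set ℂ} {R : ℝ} (hR : ∀ u ∈ K, ‖u‖ ≤ R) (h0 : (0 : ℂ) ∈ K) (z : ℂ) :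
    0 ≤ suppFn K z := by
  simpa using le_supp hR z h0

lemma supp_le {K : Set ℂ} (h0 : (0 : ℂ) ∈ K) (z : ℂ) {b : ℝ}
    (h : ∀ u ∈ K, (z * u).re ≤ b) : suppFn K z ≤ b := by
  refine csSup_le ⟨_, 0, h0, rfl⟩ ?_
  rintro _ ⟨u, hu, rfl⟩
  exact h u hu

lemma supp_lip {K : Set ℂ} {R : ℝ} (hR : ∀ u ∈ K, ‖u‖ ≤ R) (h0 : (0 : ℂ) ∈ K) (z z' : ℂ) :
    suppFn K z' ≤ suppFn K z + R * ‖z' - z‖ := by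
  refine supp_le h0 _ fun u hu => ?_
  have h1 := le_supp hR z hu
  have h2 : ((z' - z) * u).re ≤ ‖z' - z‖ * R :=
    calc _ ≤ ‖(z' - z) * u‖ := Complex.re_le_norm _
      _ = ‖z' - z‖ * ‖u‖ := norm_mul _ _
      _ ≤ _ := by gcongr; exact hR u hu
  have h3 : (z' * u).re = (z * u).re + ((z' - z) * u).re := by
    rw [← Complex.add_re]; ring_nf
  linarith

lemma supp_smul {K : Set ℂ} {R : ℝ} (hR : ∀ u ∈ K, ‖u‖ ≤ R) (h0 : (0 : ℂ) ∈ K) (z : ℂ)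
    {t : ℝ} (ht0 : 0 ≤ t) (ht1 : t ≤ 1) : suppFn K ((t : ℂ) * z) ≤ suppFn K z := by
  refine supp_le h0 _ fun u hu => ?_
  have h1 := le_supp hR z hu
  have h2 := supp_nonneg hR h0 z
  have : ((t : ℂ) * z * u).re = t * (z * u).re := by
    rw [mul_assoc, Complex.re_ofReal_mul]
  rw [this]
  nlinarith

lemma supp_cont {K : Set ℂ} {R : ℝ} (hR : ∀ u ∈ K, ‖u‖ ≤ R) (h0 : (0 : ℂ) ∈ K) :
    Continuous (suppFn K) := by
  have hR0 : 0 ≤ R := (norm_nonneg _).trans (hR 0 h0)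
  refine (LipschitzWith.of_dist_le_mul (K := R.toNNReal) fun x y => ?_).continuous
  rw [Real.coe_toNNReal _ hR0, Real.dist_eq, dist_eq_norm, abs_le]
  have h1 := supp_lip hR h0 x y
  have h2 := supp_lip hR h0 y x
  rw [norm_sub_rev] at h1
  constructor <;> linarith

lemma wtR_cont {K : Set ℂ} {R : ℝ} (hR : ∀ u ∈ K, ‖u‖ ≤ R) (h0 : (0 : ℂ) ∈ K) (n : ℕ) :
    Continuous (wtR K n) := by
  have := supp_cont hR h0
  unfold wtR
  fun_prop

lemma fam_bound {K : Set ℂ} {R : ℝ} (hR : ∀ u ∈ K, ‖u‖ ≤ R) (h0 : (0 : ℂ) ∈ K) {n : ℕ}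
    (hn : 0 < n) {F : ℂ → ℂ} (hF : MemExp K F) :
    ∃ C, ∀ s ∈ Metric.thickening (1 / (2 * n * (R + 1))) (segment ℝ (0 : ℂ) 1), ∀ z,
      ‖F (s * z)‖ * wtR K n z ≤ C := by
  have hR0 : 0 ≤ R := (norm_nonneg _).trans (hR 0 h0)
  obtain ⟨C, hC⟩ := hF.2 (2 * n) (by omega)
  refine ⟨C, fun s hs z => ?_⟩
  have h1 : ‖F (s * z)‖ * Real.exp (-(suppFn K (s * z)) - ‖s * z‖ / (2 * n : ℕ)) ≤ C :=
    hC ⟨s * z, rfl⟩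
  refine le_trans ?_ h1
  unfold wtR
  gcongr ?_ * Real.exp ?_
  rw [Metric.mem_thickening_iff] at hs
  obtain ⟨_, ⟨a, t, ha, ht, hat, rfl⟩, hd⟩ := hs
  have e : (a • (0 : ℂ) + t • (1 : ℂ)) = (t : ℂ) := by simp
  rw [e, dist_eq_norm] at hd
  have h2 := supp_smul hR h0 z ht (by linarith : t ≤ 1)
  have h3 := supp_lip hR h0 ((t : ℂ) * z) (s * z)
  rw [← sub_mul, norm_mul] at h3
  have h4 : ‖s‖ ≤ 1 + ‖s - t‖ := by
    calc ‖s‖ = ‖(t : ℂ) + (s - t)‖ := by ring_nf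
      _ ≤ ‖(t : ℂ)‖ + ‖s - t‖ := norm_add_le _ _
      _ ≤ _ := by
        have : ‖(t : ℂ)‖ = t := by simp [ht]
        rw [this]; linarith
  set d := ‖s - t‖
  have hd0 : 0 ≤ d := norm_nonneg _
  have hn' : (1 : ℝ) ≤ n := by exact_mod_cast hn
  have hd' : d * (2 * n * (R + 1)) ≤ 1 := by
    rw [lt_div_iff₀ (by positivity)] at hd; exact hd.le
  have key : R * d + ‖s‖ / (2 * n) ≤ 1 / n := by
    have : ‖s‖ / (2 * n) ≤ (1 + d) / (2 * n) := by gcongr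
    have h5 : R * d + (1 + d) / (2 * n) ≤ 1 / n := by
      rw [← sub_nonneg]
      have : 1 / (n : ℝ) - (R * d + (1 + d) / (2 * n)) = (1 - d * (2 * n * R + 1)) / (2 * n) := by
        field_simp; ring
      rw [this]
      apply div_nonneg _ (by positivity)
      nlinarith
    linarith
  have h6 := mul_le_mul_of_nonneg_right key (norm_nonneg z)
  rw [norm_mul]
  push_cast
  have h7 : (R * d + ‖s‖ / (2 * n)) * ‖z‖ = R * (d * ‖z‖) + ‖s‖ * ‖z‖ / (2 * n) := by ring
  have h8 : 1 / (n : ℝ) * ‖z‖ = ‖z‖ / n := by ring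
  rw [h7, h8] at h6
  linarith

end supp

lemma remainder {G : ℂ → ℂ} (hG : Differentiable ℂ G) {s : ℂ} {ρ C : ℝ} (hρ : 0 < ρ)
    (hC : ∀ x ∈ Metric.ball s (3 * ρ), ‖G x‖ ≤ C) {h : ℂ} (hh : ‖h‖ < ρ) :
    ‖G (s + h) - G s - h * deriv G s‖ ≤ C / ρ / ρ * ‖h‖ ^ 2 := by
  have hG' : Differentiable ℂ (deriv G) := (hG.contDiff (n := 2)).differentiable_deriv_two
  have b1 : ∀ x ∈ Metric.ball s (2 * ρ), ‖deriv G x‖ ≤ C / ρ := fun x hx => by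
    refine Complex.norm_deriv_le_of_forall_mem_sphere_norm_le hρ hG.diffContOnCl fun y hy => hC y ?_
    rw [Metric.mem_ball] at *; rw [Metric.mem_sphere] at hy
    linarith [dist_triangle y x s]
  have b2 : ∀ x ∈ Metric.ball s ρ, ‖deriv (deriv G) x‖ ≤ C / ρ / ρ := fun x hx => by
    refine Complex.norm_deriv_le_of_forall_mem_sphere_norm_le hρ hG'.diffContOnCl
      fun y hy => b1 y ?_
    rw [Metric.mem_ball] at *; rw [Metric.mem_sphere] at hy
    linarith [dist_triangle y x s]
  have hC0 : 0 ≤ C / ρ / ρ := (norm_nonneg _).trans (b2 s (Metric.mem_ball_self hρ))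
  have b3 : ∀ x ∈ Metric.closedBall s ‖h‖, ‖deriv G x - deriv G s‖ ≤ C / ρ / ρ * ‖h‖ := by
    intro x hx
    have hx' : dist x s ≤ ‖h‖ := hx
    have := (convex_ball s ρ).norm_image_sub_le_of_norm_deriv_le (f := deriv G)
      (fun y _ => hG' y) b2 (Metric.mem_ball_self hρ)
      (Metric.mem_ball.2 (lt_of_le_of_lt hx' hh) : x ∈ _)
    refine this.trans ?_
    rw [← dist_eq_norm x s]
    gcongr
  have hd : ∀ x, HasDerivAt (fun x => G x - x * deriv G s) (deriv G x - deriv G s) x := fun x => by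
    have h1 : HasDerivAt (fun x : ℂ => x * deriv G s) (deriv G s) x := by
      simpa using (hasDerivAt_id x).mul_const (deriv G s)
    exact (hG x).hasDerivAt.sub h1
  have := (convex_closedBall s ‖h‖).norm_image_sub_le_of_norm_deriv_le
    (f := fun x => G x - x * deriv G s) (C := C / ρ / ρ * ‖h‖)
    (fun y _ => (hd y).differentiableAt) (fun y hy => by rw [(hd y).deriv]; exact b3 y hy)
    (Metric.mem_closedBall_self (norm_nonneg _)) (y := s + h) (by simp)
  have e : G (s + h) - (s + h) * deriv G s - (G s - s * deriv G s)
    = G (s + h) - G s - h * deriv G s := by ring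
  rw [e] at this
  refine this.trans (le_of_eq ?_)
  rw [add_sub_cancel_left]; ring

lemma fam_diff {F w : ℂ → ℂ} (hF : Differentiable ℂ F) (hw : Continuous w) {U : Set ℂ}
    (hU : IsOpen U) {Φ : ℂ → (ℂ →ᵇ ℂ)} (hΦ : ∀ s ∈ U, ∀ z, Φ s z = F (s * z) * w z)
    {C : ℝ} (hC : ∀ s ∈ U, ∀ z, ‖F (s * z) * w z‖ ≤ C) : DifferentiableOn ℂ Φ U := by
  intro s hs
  obtain ⟨r, hr, hrU⟩ := Metric.isOpen_iff.1 hU s hs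
  obtain ⟨ρ, hρ, rfl⟩ : ∃ ρ > 0, r = 3 * ρ := ⟨r / 3, by positivity, by ring⟩
  have hGd : ∀ z x, HasDerivAt (fun x => F (x * z) * w z) (deriv F (x * z) * z * w z) x := by
    intro z x
    have h1 : HasDerivAt (fun x : ℂ => x * z) z x := by
      simpa using (hasDerivAt_id x).mul_const z
    exact ((hF (x * z)).hasDerivAt.comp x h1).mul_const (w z)
  have hGC : ∀ z, ∀ x ∈ Metric.ball s (3 * ρ), ‖F (x * z) * w z‖ ≤ C :=
    fun z x hx => hC x (hrU hx) z
  have hF' : Continuous (deriv F) := (hF.contDiff (n := 1)).continuous_deriv le_rfl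
  let D : ℂ →ᵇ ℂ := BoundedContinuousFunction.ofNormedAddCommGroup
    (fun z => deriv F (s * z) * z * w z) (by fun_prop) (C / ρ) (fun z => by
      rw [← (hGd z s).deriv]
      refine Complex.norm_deriv_le_of_forall_mem_sphere_norm_le hρ
        (Differentiable.diffContOnCl fun x => (hGd z x).differentiableAt) fun y hy => hGC z y ?_
      rw [Metric.mem_sphere] at hy
      rw [Metric.mem_ball]; linarith)
  have hC0 : 0 ≤ C := (norm_nonneg _).trans (hC s hs 0)
  have : HasDerivAt Φ D s := by
    rw [hasDerivAt_iff_isLittleO_nhds_zero]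
    have hO : (fun h : ℂ => Φ (s + h) - Φ s - h • D) =O[𝓝 0] fun h : ℂ => h ^ 2 := by
      refine Asymptotics.IsBigO.of_bound (C / ρ / ρ) ?_
      filter_upwards [Metric.ball_mem_nhds (0 : ℂ) hρ] with h hh
      rw [mem_ball_zero_iff] at hh
      rw [norm_pow]
      refine (BoundedContinuousFunction.norm_le (by positivity)).2 fun z => ?_
      have hm : s + h ∈ U := hrU (by
        rw [Metric.mem_ball, dist_eq_norm, add_sub_cancel_left]; linarith)
      have := remainder (G := fun x => F (x * z) * w z)
        (fun x => (hGd z x).differentiableAt) hρ (hGC z) hh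
      rw [(hGd z s).deriv] at this
      simpa [hΦ s hs, hΦ _ hm, D] using this
    exact hO.trans_isLittleO (Asymptotics.isLittleO_pow_id one_lt_two)
  exact this.differentiableAt.differentiableWithinAt

lemma exB {K : Set ℂ} {R : ℝ} (hR : ∀ u ∈ K, ‖u‖ ≤ R) (h0 : (0 : ℂ) ∈ K) {n : ℕ}
    {F : ℂ → ℂ} (hF : Continuous F) {C : ℝ} (hC : ∀ z, ‖F z‖ * wtR K n z ≤ C) :
    ∃ b : ℂ →ᵇ ℂ, ∀ z, b z = F z * (wtR K n z : ℂ) := by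
  have := wtR_cont hR h0 n
  refine ⟨BoundedContinuousFunction.ofNormedAddCommGroup
    (fun z => F z * (wtR K n z : ℂ)) (by fun_prop) C fun z => ?_, fun z => rfl⟩
  rw [norm_mul, Complex.norm_real, Real.norm_of_nonneg (wtR_pos K n z).le]
  exact hC z

lemma exB' {K : Set ℂ} {R : ℝ} (hR : ∀ u ∈ K, ‖u‖ ≤ R) (h0 : (0 : ℂ) ∈ K) {n : ℕ} (hn : 0 < n)
    {F : ℂ → ℂ} (hF : MemExp K F) :
    ∃ b : ℂ →ᵇ ℂ, ∀ z, b z = F z * (wtR K n z : ℂ) := by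
  obtain ⟨C, hC⟩ := hF.2 n hn
  exact exB hR h0 hF.1.continuous (C := C) fun z => hC ⟨z, rfl⟩

lemma fam {K : Set ℂ} {R : ℝ} (hR : ∀ u ∈ K, ‖u‖ ≤ R) (h0 : (0 : ℂ) ∈ K) {n : ℕ}
    (hn : 0 < n) {F : ℂ → ℂ} (hF : MemExp K F) :
    ∃ Φ : ℂ → (ℂ →ᵇ ℂ),
      DifferentiableOn ℂ Φ (Metric.thickening (1 / (2 * n * (R + 1))) (segment ℝ (0 : ℂ) 1)) ∧
      ∀ s ∈ Metric.thickening (1 / (2 * n * (R + 1))) (segment ℝ (0 : ℂ) 1), ∀ z,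
        Φ s z = F (s * z) * (wtR K n z : ℂ) := by
  obtain ⟨C, hC⟩ := fam_bound hR h0 hn hF
  have : ∀ s, ∃ b : ℂ →ᵇ ℂ, s ∈ Metric.thickening (1 / (2 * n * (R + 1))) (segment ℝ (0 : ℂ) 1) →
      ∀ z, b z = F (s * z) * (wtR K n z : ℂ) := by
    intro s
    by_cases hs : s ∈ Metric.thickening (1 / (2 * n * (R + 1))) (segment ℝ (0 : ℂ) 1)
    · obtain ⟨b, hb⟩ := exB hR h0 (F := fun z => F (s * z)) (n := n)
        (hF.1.continuous.comp (by fun_prop)) (hC s hs)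
      exact ⟨b, fun _ => hb⟩
    · exact ⟨0, fun h => absurd h hs⟩
  choose Φ hΦ using this
  refine ⟨Φ, fam_diff (w := fun z => (wtR K n z : ℂ)) hF.1 ?_ Metric.isOpen_thickening hΦ (C := C)
    ?_, hΦ⟩
  · have := wtR_cont hR h0 n
    fun_prop
  · intro s hs z
    rw [norm_mul, Complex.norm_real, Real.norm_of_nonneg (wtR_pos K n z).le]
    exact hC s hs z

lemma iterDeriv_clm {E : Type*} [NormedAddCommGroup E] [NormedSpace ℂ E]
    (L : E →L[ℂ] ℂ) {Φ : ℂ → E} {x : ℂ} (k : ℕ) (h : ContDiffAt ℂ k Φ x) :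
    iteratedDeriv k (fun s => L (Φ s)) x = L (iteratedDeriv k Φ x) := by
  rw [iteratedDeriv_eq_iteratedFDeriv, iteratedDeriv_eq_iteratedFDeriv]
  have := L.iteratedFDeriv_comp_left h le_rfl
  change (iteratedFDeriv ℂ k (L ∘ Φ) x) _ = _
  rw [this]; rfl

/-- Derivatives at `0` of the family paired with a functional. -/
lemma fam_iter {F w : ℂ → ℂ} (hF : Differentiable ℂ F) {U : Set ℂ}
    (hU : IsOpen U) (hU0 : (0 : ℂ) ∈ U) {Φ : ℂ → (ℂ →ᵇ ℂ)} (hd : DifferentiableOn ℂ Φ U)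
    (hΦ : ∀ s ∈ U, ∀ z, Φ s z = F (s * z) * w z) (k : ℕ) {p : ℂ →ᵇ ℂ}
    (hp : ∀ z, p z = z ^ k * w z) (L : (ℂ →ᵇ ℂ) →L[ℂ] ℂ) :
    iteratedDeriv k (fun s => L (Φ s)) 0 = iteratedDeriv k F 0 * L p := by
  have hc : ContDiffAt ℂ k Φ 0 := (hd.analyticAt (hU.mem_nhds hU0)).contDiffAt
  rw [iterDeriv_clm L k hc]
  have : iteratedDeriv k Φ 0 = iteratedDeriv k F 0 • p := by
    ext z
    have h1 := iterDeriv_clm (BoundedContinuousFunction.evalCLM ℂ z) k hc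
    simp only [BoundedContinuousFunction.evalCLM_apply] at h1
    rw [← h1]
    have h2 : (fun s => Φ s z) =ᶠ[𝓝 0] fun s => F (z * s) * w z := by
      filter_upwards [hU.mem_nhds hU0] with s hs
      rw [hΦ s hs, mul_comm s z]
    rw [h2.iteratedDeriv_eq, iteratedDeriv_mul_const_field,
      iteratedDeriv_comp_const_mul (hF.contDiff (n := k))]
    simp [hp]
    ring
  rw [this, map_smul, smul_eq_mul]

lemma powMemExp {K : Set ℂ} {R : ℝ} (hR : ∀ u ∈ K, ‖u‖ ≤ R) (h0 : (0 : ℂ) ∈ K) (k : ℕ) :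
    MemExp K (fun z => z ^ k) := by
  refine ⟨by fun_prop, fun n hn => ⟨k.factorial * n ^ k, ?_⟩⟩
  rintro _ ⟨z, rfl⟩
  have hn' : (0 : ℝ) < n := by exact_mod_cast hn
  have h1 := Real.pow_div_factorial_le_exp (‖z‖ / n) (by positivity) k
  have h2 := supp_nonneg hR h0 z
  have h3 : Real.exp (-(suppFn K z) - ‖z‖ / n) ≤ Real.exp (-(‖z‖ / n)) := by
    gcongr; linarith
  have h4 : ‖z‖ ^ k ≤ k.factorial * n ^ k * Real.exp (‖z‖ / n) := by
    rw [div_pow, div_div, div_le_iff₀ (by positivity)] at h1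
    linarith
  calc ‖z ^ k‖ * Real.exp (-(suppFn K z) - ‖z‖ / n)
      ≤ (k.factorial * n ^ k * Real.exp (‖z‖ / n)) * Real.exp (-(‖z‖ / n)) := by
        rw [norm_pow]; gcongr
    _ = _ := by rw [mul_assoc, ← Real.exp_add]; simp

lemma sep {E : Type*} [NormedAddCommGroup E] [NormedSpace ℂ E] (V : Submodule ℂ E) (x : E)
    (h : ∀ L : E →L[ℂ] ℂ, (∀ v ∈ V, L v = 0) → L x = 0) : x ∈ closure (V : Set E) := by
  rw [← Submodule.topologicalClosure_coe]
  by_contra hx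
  set W := V.topologicalClosure with hW
  have : IsClosed (W : Set E) := V.isClosed_topologicalClosure
  have hne : (W.mkQ x) ≠ 0 := by
    intro h; exact hx ((Submodule.Quotient.mk_eq_zero W).1 h)
  obtain ⟨g, hg⟩ := SeparatingDual.exists_ne_zero (R := ℂ) hne
  refine hg (h (g.comp W.mkQL) fun v hv => ?_)
  have : W.mkQ v = 0 := (Submodule.Quotient.mk_eq_zero W).2 (V.le_topologicalClosure hv)
  change g (W.mkQ v) = 0
  rw [this, map_zero]

lemma dil_forward {f : ℂ → ℂ} {K : Set ℂ} {R : ℝ} (hR : ∀ u ∈ K, ‖u‖ ≤ R) (h0 : (0 : ℂ) ∈ K)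
    {A : Set ℂ} (hA : ∀ α ∈ A, MemExp K (fun z => f (α * z))) (hf : Differentiable ℂ f)
    (H : ∀ g : ℂ → ℂ, MemExp K g → ∀ n : ℕ, 0 < n → ∀ ε > (0 : ℝ),
        ∃ (s : Finset ℂ) (coef : ℂ → ℂ), ↑s ⊆ A ∧
          expNorm K n (fun z => g z - ∑ α ∈ s, coef α * f (α * z)) < ε)
    (m : ℕ) (hm : iteratedDeriv m f 0 = 0) : False := by
  obtain ⟨s, c, hs, hlt⟩ := H _ (powMemExp hR h0 m) 1 one_pos (Real.exp (-(R + 1)) / 2)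
    (by positivity)
  set G : ℂ → ℂ := fun z => z ^ m - ∑ α ∈ s, c α * f (α * z) with hGdef
  have hG : Differentiable ℂ G := by
    rw [hGdef]; fun_prop
  have hbdd : BddAbove (Set.range fun z : ℂ =>
      ‖G z‖ * Real.exp (-(suppFn K z) - ‖z‖ / (1 : ℕ))) := by
    obtain ⟨C0, hC0⟩ := (powMemExp hR h0 m).2 1 one_pos
    have : ∀ α, ∃ C, α ∈ A → ∀ z,
        ‖f (α * z)‖ * Real.exp (-(suppFn K z) - ‖z‖ / (1 : ℕ)) ≤ C := by
      intro α
      by_cases h : α ∈ A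
      · obtain ⟨C, hC⟩ := (hA α h).2 1 one_pos
        exact ⟨C, fun _ z => hC ⟨z, rfl⟩⟩
      · exact ⟨0, fun h' => absurd h' h⟩
    choose C hC using this
    refine ⟨C0 + ∑ α ∈ s, ‖c α‖ * C α, ?_⟩
    rintro _ ⟨z, rfl⟩
    have h1 : ‖z ^ m‖ * Real.exp (-(suppFn K z) - ‖z‖ / (1 : ℕ)) ≤ C0 := hC0 ⟨z, rfl⟩
    have h2 : ‖G z‖ ≤ ‖z ^ m‖ + ∑ α ∈ s, ‖c α‖ * ‖f (α * z)‖ := by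
      refine (norm_sub_le _ _).trans ?_
      gcongr
      refine (norm_sum_le _ _).trans (le_of_eq ?_)
      simp
    refine (mul_le_mul_of_nonneg_right h2 (Real.exp_pos _).le).trans ?_
    rw [add_mul, Finset.sum_mul]
    refine add_le_add h1 (Finset.sum_le_sum fun α hα => ?_)
    rw [mul_assoc]
    exact mul_le_mul_of_nonneg_left (hC α (hs hα) z) (norm_nonneg _)
  have hsph : ∀ z ∈ Metric.sphere (0 : ℂ) 1, ‖G z‖ ≤ 1 / 2 := by
    intro z hz
    rw [mem_sphere_zero_iff_norm] at hz
    have h1 : ‖G z‖ * Real.exp (-(suppFn K z) - ‖z‖ / (1 : ℕ)) < Real.exp (-(R + 1)) / 2 :=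
      lt_of_le_of_lt (le_csSup hbdd ⟨z, rfl⟩) hlt
    have h2 : suppFn K z ≤ R := by
      refine supp_le h0 z fun u hu => ?_
      calc _ ≤ ‖z * u‖ := Complex.re_le_norm _
        _ = ‖u‖ := by rw [norm_mul, hz, one_mul]
        _ ≤ R := hR u hu
    have h3 : Real.exp (-(R + 1)) ≤ Real.exp (-(suppFn K z) - ‖z‖ / (1 : ℕ)) := by
      rw [hz]; gcongr; push_cast; linarith
    have h4 := mul_le_mul_of_nonneg_left h3 (norm_nonneg (G z))
    have h5 := Real.exp_pos (-(R + 1))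
    by_contra! h6
    nlinarith
  have hder := Complex.norm_iteratedDeriv_le_of_forall_mem_sphere_norm_le m one_pos
    hG.diffContOnCl hsph
  have hval : iteratedDeriv m G 0 = m.factorial := by
    have hcd : ∀ α : ℂ, ContDiff ℂ m (fun z => c α * f (α * z)) := fun α =>
      Differentiable.contDiff (by fun_prop)
    rw [hGdef, iteratedDeriv_fun_sub (by fun_prop)
      ((ContDiff.sum fun α _ => hcd α).contDiffAt), iteratedDeriv_fun_sum fun α _ =>
        (hcd α).contDiffAt]
    have : ∀ α ∈ s, iteratedDeriv m (fun z => c α * f (α * z)) 0 = 0 := by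
      intro α _
      rw [iteratedDeriv_const_mul_field, iteratedDeriv_comp_const_mul (hf.contDiff (n := m))]
      simp [hm]
    rw [Finset.sum_eq_zero this, iteratedDeriv_fun_pow_zero]
    simp
  rw [hval] at hder
  have : (0 : ℝ) < m.factorial := by exact_mod_cast m.factorial_pos
  simp at hder
  linarith

lemma dil_backward {f : ℂ → ℂ} {K : Set ℂ} {R : ℝ} (hR : ∀ u ∈ K, ‖u‖ ≤ R) (h0 : (0 : ℂ) ∈ K)
    {A : Set ℂ} (hAb : Bornology.IsBounded A) (hAinf : A.Infinite)
    (hA : ∀ α ∈ A, MemExp K (fun z => f (α * z))) (hf : Differentiable ℂ f)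
    (H : ∀ m : ℕ, iteratedDeriv m f 0 ≠ 0) {g : ℂ → ℂ} (hg : MemExp K g) {n : ℕ} (hn : 0 < n)
    {ε : ℝ} (hε : 0 < ε) :
    ∃ (s : Finset ℂ) (coef : ℂ → ℂ), ↑s ⊆ A ∧
          expNorm K n (fun z => g z - ∑ α ∈ s, coef α * f (α * z)) < ε := by
  have hR0 : 0 ≤ R := (norm_nonneg _).trans (hR 0 h0)
  have hn' : (0 : ℝ) < n := by exact_mod_cast hn
  have hδ : 0 < 1 / (2 * n * (R + 1)) := by positivity
  set U := Metric.thickening (1 / (2 * n * (R + 1))) (segment ℝ (0 : ℂ) 1) with hUdef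
  have hUo : IsOpen U := Metric.isOpen_thickening
  have hUc : IsPreconnected U := ((convex_segment _ _).thickening _).isPreconnected
  have hU0 : (0 : ℂ) ∈ U := Metric.self_subset_thickening hδ _ (left_mem_segment ℝ _ _)
  have hU1 : (1 : ℂ) ∈ U := Metric.self_subset_thickening hδ _ (right_mem_segment ℝ _ _)
  have : ∀ α, ∃ b : ℂ →ᵇ ℂ, α ∈ A → ∀ z, b z = f (α * z) * (wtR K n z : ℂ) := by
    intro α
    by_cases h : α ∈ A
    · obtain ⟨b, hb⟩ := exB' hR h0 hn (hA α h)
      exact ⟨b, fun _ => hb⟩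
    · exact ⟨0, fun h' => absurd h' h⟩
  choose q hq using this
  obtain ⟨b, hb⟩ := exB' hR h0 hn hg
  have hmem : b ∈ closure (Submodule.span ℂ (q '' A) : Set (ℂ →ᵇ ℂ)) := by
    refine sep _ _ fun L hL => ?_
    have hLq : ∀ α ∈ A, L (q α) = 0 := fun α hα => hL _ (Submodule.subset_span ⟨α, hα, rfl⟩)
    have hp : ∀ k : ℕ, ∃ p : ℂ →ᵇ ℂ, ∀ z, p z = z ^ k * (wtR K n z : ℂ) := fun k =>
      exB' hR h0 hn (powMemExp hR h0 k)
    choose p hp using hp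
    obtain ⟨a, -, ha⟩ := hAinf.exists_accPt_of_subset_isCompact hAb.isCompact_closure subset_closure
    rw [accPt_iff_frequently_nhdsNE] at ha
    obtain ⟨α₀, hα₀A, hα₀, haU⟩ : ∃ α₀ ∈ A, α₀ ≠ 0 ∧ a / α₀ ∈ U := by
      by_cases ha0 : a = 0
      · obtain ⟨α₀, h1, h2⟩ := hAinf.exists_notMem_finset {0}
        exact ⟨α₀, h1, by simpa using h2, by simpa [ha0] using hU0⟩
      · have hc : ContinuousAt (fun α => a / α) a := by fun_prop (disch := exact ha0)
        have e1 : ∀ᶠ α in 𝓝 a, a / α ∈ U :=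
          hc.eventually_mem (hUo.mem_nhds (by simpa [div_self ha0] using hU1))
        have e2 : ∀ᶠ α in 𝓝 a, α ≠ 0 := isOpen_ne.mem_nhds ha0
        obtain ⟨α, h1, h2, h3⟩ :=
          (ha.and_eventually ((e1.and e2).filter_mono nhdsWithin_le_nhds)).exists
        exact ⟨α, h1, h3, h2⟩
    obtain ⟨Φ, hΦd, hΦ⟩ := fam hR h0 hn (hA α₀ hα₀A)
    obtain ⟨Ψ, hΨd, hΨ⟩ := fam hR h0 hn hg
    have anal : ∀ {X : ℂ → (ℂ →ᵇ ℂ)}, DifferentiableOn ℂ X U →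
        AnalyticOnNhd ℂ (fun s => L (X s)) U := fun hX =>
      (L.differentiable.comp_differentiableOn hX).analyticOnNhd hUo
    have hfreq : ∃ᶠ s in 𝓝[≠] (a / α₀), L (Φ s) = 0 := by
      have ht : Tendsto (fun α => α / α₀) (𝓝[≠] a) (𝓝[≠] (a / α₀)) := by
        refine tendsto_nhdsWithin_iff.2 ⟨?_, ?_⟩
        · exact (continuous_id.div_const α₀).continuousAt.tendsto.mono_left nhdsWithin_le_nhds
        · filter_upwards [self_mem_nhdsWithin] with x hx hx'
          exact hx ((div_left_inj' hα₀).1 hx')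
      have e1 : ∀ᶠ α in 𝓝[≠] a, α / α₀ ∈ U :=
        ht.eventually (mem_nhdsWithin_of_mem_nhds (hUo.mem_nhds haU))
      refine ht.frequently ((ha.and_eventually e1).mono ?_)
      rintro α ⟨h1, h2⟩
      have : Φ (α / α₀) = q α := by
        ext z
        rw [hΦ _ h2, hq α h1, ← mul_assoc, mul_div_cancel₀ _ hα₀]
      rw [this, hLq α h1]
    have hz := (anal hΦd).eqOn_zero_of_preconnected_of_frequently_eq_zero hUc haU hfreq
    have hLp : ∀ k, L (p k) = 0 := by
      intro k
      have h1 := fam_iter (hA α₀ hα₀A).1 hUo hU0 hΦd hΦ k (hp k) L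
      have h2 : (fun s => L (Φ s)) =ᶠ[𝓝 0] fun _ => 0 := by
        filter_upwards [hUo.mem_nhds hU0] with s hs using hz hs
      rw [h2.iteratedDeriv_eq, iteratedDeriv_comp_const_mul (hf.contDiff (n := k))] at h1
      have h3 : iteratedDeriv k (fun _ : ℂ => (0 : ℂ)) 0 = 0 := by
        simp
      rw [h3] at h1
      have h4 := H k
      simpa [hα₀, h4] using h1.symm
    have hz2 : (fun s => L (Ψ s)) =ᶠ[𝓝 0] 0 := by
      obtain ⟨r, hr, hrU⟩ := Metric.isOpen_iff.1 hUo 0 hU0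
      filter_upwards [Metric.ball_mem_nhds (0 : ℂ) hr] with s hs
      have h1 := Complex.hasSum_taylorSeries_on_ball (f := fun s => L (Ψ s))
        ((anal hΨd).differentiableOn.mono hrU) hs
      refine h1.unique ?_
      have : (fun k : ℕ => ((k.factorial : ℂ))⁻¹ • (s - 0) ^ k •
          iteratedDeriv k (fun s => L (Ψ s)) 0) = fun _ => 0 := by
        funext k
        rw [fam_iter hg.1 hUo hU0 hΨd hΨ k (hp k) L, hLp k]
        simp
      rw [this]
      exact hasSum_zero
    have hz3 := (anal hΨd).eqOn_zero_of_preconnected_of_eventuallyEq_zero hUc hU0 hz2 hU1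
    have : Ψ 1 = b := by
      ext z
      rw [hΨ 1 hU1, hb, one_mul]
    rw [← this]
    exact hz3
  obtain ⟨y, hy, hd⟩ := Metric.mem_closure_iff.1 hmem ε hε
  obtain ⟨l, hl, rfl⟩ := (Finsupp.mem_span_image_iff_linearCombination ℂ).1 hy
  have hlA : ↑l.support ⊆ A := (Finsupp.mem_supported ℂ l).1 hl
  refine ⟨l.support, l, hlA, lt_of_le_of_lt ?_ hd⟩
  refine csSup_le (Set.range_nonempty _) ?_
  rintro _ ⟨z, rfl⟩
  have h1 := BoundedContinuousFunction.dist_coe_le_dist (f := b)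
    (g := Finsupp.linearCombination ℂ q l) z
  refine le_trans (le_of_eq ?_) h1
  have h2 : (Finsupp.linearCombination ℂ q l) z =
      (∑ α ∈ l.support, l α * f (α * z)) * (wtR K n z : ℂ) := by
    rw [Finsupp.linearCombination_apply, Finsupp.sum, BoundedContinuousFunction.sum_apply,
      Finset.sum_mul]
    refine Finset.sum_congr rfl fun α hα => ?_
    rw [BoundedContinuousFunction.smul_apply, hq α (hlA hα), smul_eq_mul, mul_assoc]
  rw [h2, hb, dist_eq_norm, ← sub_mul, norm_mul, Complex.norm_real,
    Real.norm_of_nonneg (wtR_pos K n z).le]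
  rfl

/-- **Lemma (density of dilates).** Let `f` be entire of exponential type, `K` compact
convex with `0 ∈ K`, and `A` a bounded infinite set with `f(α·) ∈ Exp(K)` for all
`α ∈ A`. Then `span {f(α·) : α ∈ A}` is dense in `Exp(K)` iff all Taylor coefficients
of `f` at `0` are nonzero. -/
theorem stmt7 (f : ℂ → ℂ) (hf : ExpType f)
    (K : Set ℂ) (hKc : IsCompact K) (hKconv : Convex ℝ K) (h0 : (0 : ℂ) ∈ K)
    (A : Set ℂ) (hAb : Bornology.IsBounded A) (hAinf : A.Infinite)
    (hA : ∀ α ∈ A, MemExp K (fun z => f (α * z))) :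
    (∀ g : ℂ → ℂ, MemExp K g → ∀ n : ℕ, 0 < n → ∀ ε > (0 : ℝ),
        ∃ (s : Finset ℂ) (coef : ℂ → ℂ), ↑s ⊆ A ∧
          expNorm K n (fun z => g z - ∑ α ∈ s, coef α * f (α * z)) < ε) ↔
      (∀ m : ℕ, iteratedDeriv m f 0 ≠ 0) := by
  obtain ⟨R, hR⟩ : ∃ R, ∀ u ∈ K, ‖u‖ ≤ R := hKc.isBounded.exists_norm_le
  constructor
  · intro H m hm
    exact dil_forward hR h0 hA hf.1 H m hm
  · intro H g hg n hn ε hε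
    exact dil_backward hR h0 hAb hAinf hA hf.1 H hg hn hε
end
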